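/- For every pair of fixed integers d ≥ 1 and k ≥ 4, as the integer b → ∞ (with b > d), I(b,d,k) = b·log b + a₁/b^{2k−1} + a₂/b^{2k} + a₃/b^{2k+1} + a₄/b^{2k+2} + O(b^{−2k−3}), where: a₁ = (d + 1/2)/d²; a₂ = (d + 1/2)((k−2)d + k − 3)/(d²(d+1)); a₃ = (d + 1/2)ζ(2) + (d + 1/2)((k² − 5k + 4)d³ + (2k² − 12k + 8)d² + (k² − 7k + 1)d − 2)/(2d³(d+1)²); a₄ = (d + 1/2)·( −2d·ζ(3) + k·ζ(2) + ((k³ − 9k² + 14k)d⁵ + (3k³ − 30k² + 45k + 42)d⁴ + (3k³ − 33k² + 39k + 114)d³ + (k³ − 12k² + 2k + 108)d² + (−6k + 43)d + 6)/(6d⁴(d+1)³) ). -/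

import Mathlib

/-!
Writing a positive integer as `m = b ^ l * (a + x)`, where `a` is its leading digit and the other
`l` digits are those of `x ∈ [0, 1)`, turns the Irwin sum into a sum over `a` of the integrals of
`1 / (a + x)` against Burnol's measures `μₖ` (against `μₖ₋₁` when `a = d`). Splitting off the
first digit of `x` gives a recursion for `μₖ`. It is satisfied by `b` times Lebesgue measure,
except that for `k = 0` the branch of the digit `d` is replaced by a point mass at `0`, which
shifts the first moment by `(d + 1 / 2) / b`. To first order the deviation of `μₖ` from `b` times
Lebesgue measure is therefore the distributional derivative of a self-similar probability measure
`ν`, multiplied by `b * (d + 1 / 2) * (b ^ 2 - b + 1) ^ (-(k + 1))`; the remaining error is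
smaller than this by a factor of order `b ^ (-(k + 1))`. Lebesgue measure contributes exactly
`b * log b`, so everything reduces to expanding `∫ -1 / (a + x) ^ 2 ∂ν` in powers of `1 / b`; the
zeta values come from summing the first two coefficients over `a`.
-/

open Filter Asymptotics

/-- The Irwin harmonic sum `I(b,d,k)`: sum of `1/m` over positive integers `m`
whose base-`b` digit list contains the digit `d` exactly `k` times. -/
noncomputable def irwinSum (b d k : ℕ) : ℝ :=
  ∑' m : ℕ, if 0 < m ∧ (Nat.digits b m).count d = k then (1 : ℝ) / m else 0

/-- `ζ(s) = ∑_{n ≥ 1} n^{-s}` for an integer exponent. -/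
noncomputable def zetaR (s : ℕ) : ℝ := ∑' n : ℕ, 1 / ((n : ℝ) + 1) ^ s

namespace Irwin

open Set MeasureTheory
open scoped ENNReal Nat

section DigitMaps

/-- The inverse branch `x ↦ (a + x) / b` of multiplication by `b` modulo one, which prepends the
digit `a` to the base-`b` expansion of `x ∈ [0, 1]`. -/
noncomputable def digitMap (b a : ℕ) (x : ℝ) : ℝ := (a + x) / b

variable {b a : ℕ} {x : ℝ} {f : ℝ → ℝ}

theorem digitMap_mem_Icc (ha : a < b) (hx : x ∈ Icc (0 : ℝ) 1) :
    digitMap b a x ∈ Icc (0 : ℝ) 1 := by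
  have hab : (a : ℝ) + 1 ≤ b := by exact_mod_cast ha
  refine ⟨div_nonneg (add_nonneg a.cast_nonneg hx.1) b.cast_nonneg,
    div_le_one_of_le₀ ?_ b.cast_nonneg⟩
  linarith [hx.2]

theorem contDiff_digitMap {n : WithTop ℕ∞} : ContDiff ℝ n (digitMap b a) := by
  unfold digitMap
  fun_prop

theorem continuous_digitMap : Continuous (digitMap b a) :=
  (contDiff_digitMap (n := 0)).continuous

theorem deriv_comp_digitMap :
    deriv (fun x ↦ f (digitMap b a x)) = fun x ↦ (b : ℝ)⁻¹ * deriv f (digitMap b a x) := by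
  ext x
  simp only [digitMap, div_eq_inv_mul]
  rw [deriv_comp_const_add (fun y ↦ f ((b : ℝ)⁻¹ * y)), deriv_comp_mul_left, smul_eq_mul]

theorem continuousOn_comp_digitMap (hf : ContinuousOn f (Icc 0 1)) (ha : a < b) :
    ContinuousOn (fun x ↦ f (digitMap b a x)) (Icc 0 1) :=
  hf.comp continuous_digitMap.continuousOn fun _ ↦ digitMap_mem_Icc ha

end DigitMaps

section SelfSimilar

theorem integrable_of_continuousOn_Icc {μ : Measure ℝ} [IsFiniteMeasure μ]
    (hμ : ∀ᵐ x ∂μ, x ∈ Icc (0 : ℝ) 1) {f : ℝ → ℝ} (hf : ContinuousOn f (Icc 0 1)) :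
    Integrable f μ := by
  rw [← Measure.restrict_eq_self_of_ae_mem hμ]
  exact hf.integrableOn_compact isCompact_Icc

/-- `seqCons x ω` is the sequence `x, ω 0, ω 1, …`. -/
def seqCons {X : Type*} (x : X) (ω : ℕ → X) : ℕ → X
  | 0 => x
  | n + 1 => ω n

section SeqCons

variable {X : Type*}

theorem seqCons_mem_pi_iff {s : Finset ℕ} {t : ℕ → Set X} {x : X} {ω : ℕ → X} :
    seqCons x ω ∈ (s : Set ℕ).pi t ↔
      (0 ∈ s → x ∈ t 0) ∧ ∀ n, n + 1 ∈ s → ω n ∈ t (n + 1) := by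
  refine ⟨fun h ↦ ⟨h 0, fun n ↦ h (n + 1)⟩, ?_⟩
  rintro ⟨h0, h⟩ (_ | n) hn
  exacts [h0 hn, h n hn]

variable [MeasurableSpace X]

theorem measurable_seqCons : Measurable fun z : X × (ℕ → X) ↦ seqCons z.1 z.2 :=
  measurable_pi_iff.2 fun n ↦ by cases n <;> simp only [seqCons] <;> fun_prop

theorem map_seqCons_prod_infinitePi (p : Measure X) [IsProbabilityMeasure p] :
    (p.prod (Measure.infinitePi fun _ : ℕ ↦ p)).map (fun z ↦ seqCons z.1 z.2)
      = Measure.infinitePi fun _ ↦ p := by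
  classical
  refine Measure.eq_infinitePi _ fun s t ht ↦ ?_
  let T : ℕ → Set X := fun n ↦ if n ∈ s then t n else univ
  have hT_meas (n) : MeasurableSet (T n) := by
    simp only [T]; split_ifs <;> simp [ht]
  obtain ⟨N, hN⟩ : ∃ N, s ⊆ Finset.range (N + 1) :=
    ⟨s.sup id, fun i hi ↦ Finset.mem_range.2 (Nat.lt_succ_of_le (Finset.le_sup (f := id) hi))⟩
  have hpre : (fun z ↦ seqCons z.1 z.2) ⁻¹' (s : Set ℕ).pi t
      = T 0 ×ˢ (Finset.range N : Set ℕ).pi fun n ↦ T (n + 1) := by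
    ext ⟨x, ω⟩
    have hlt n (hn : n + 1 ∈ s) : n < N := by simpa using hN hn
    rw [mem_preimage, seqCons_mem_pi_iff, mem_prod, Set.mem_pi]
    simp only [Finset.coe_range, mem_Iio, T]
    refine and_congr ?_ (forall_congr' fun n ↦ ?_)
    · split_ifs <;> simp [*]
    · by_cases hn : n + 1 ∈ s <;> simp [hn, hlt]
  rw [Measure.map_apply measurable_seqCons (.pi s.countable_toSet fun i _ ↦ ht i), hpre,
    Measure.prod_prod, Measure.infinitePi_pi _ fun i _ ↦ hT_meas _, mul_comm,
    ← Finset.prod_range_succ' (fun n ↦ p (T n)),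
    ← Finset.prod_subset hN fun i _ hi ↦ by simp [T, hi]]
  exact Finset.prod_congr rfl fun i hi ↦ by simp [T, hi]

theorem ofDigits_seqCons {b : ℕ} (a : Fin b) (ω : ℕ → Fin b) :
    Real.ofDigits (seqCons a ω) = digitMap b a (Real.ofDigits ω) := by
  rw [Real.ofDigits_eq_sum_add_ofDigits _ 1]
  simp [Real.ofDigitsTerm, seqCons, digitMap, div_eq_inv_mul, mul_add, mul_comm]

end SeqCons

/-- `ν` is a self-similar probability measure on `[0, 1]`: the law of `∑ Xᵢ b⁻ⁱ` for independent
digits `Xᵢ` taking the value `a < b` with probability `w a`, characterised by Hutchinson's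
equation. -/
structure IsSelfSimilar (b : ℕ) (w : ℕ → ℝ) (ν : Measure ℝ) : Prop where
  isProbabilityMeasure : IsProbabilityMeasure ν
  ae_mem_Icc : ∀ᵐ x ∂ν, x ∈ Icc (0 : ℝ) 1
  eq_sum_map : ν = ∑ a ∈ Finset.range b, ENNReal.ofReal (w a) • ν.map (digitMap b a)

theorem exists_isSelfSimilar {b : ℕ} {w : ℕ → ℝ} (hw : ∀ a, 0 ≤ w a)
    (hw_sum : ∑ a ∈ Finset.range b, w a = 1) : ∃ ν : Measure ℝ, IsSelfSimilar b w ν := by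
  set p : Measure (Fin b) := ∑ a : Fin b, ENNReal.ofReal (w a) • Measure.dirac a with hp
  have : IsProbabilityMeasure p := ⟨by
    simp [hp, ← ENNReal.ofReal_sum_of_nonneg fun (a : Fin b) _ ↦ hw a,
      Fin.sum_univ_eq_sum_range w, hw_sum]⟩
  set P : Measure (ℕ → Fin b) := Measure.infinitePi fun _ ↦ p with hP
  have hm : Measurable (Real.ofDigits (b := b)) := Real.continuous_ofDigits.measurable
  refine ⟨P.map Real.ofDigits, Measure.isProbabilityMeasure_map hm.aemeasurable,
    (ae_map_iff hm.aemeasurable measurableSet_Icc).2 <| .of_forall fun ω ↦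
      ⟨Real.ofDigits_nonneg ω, Real.ofDigits_le_one ω⟩, ?_⟩
  ext s hs
  have hfiber (a : Fin b) : P (Prod.mk a ⁻¹' ((Real.ofDigits ∘ fun z ↦ seqCons z.1 z.2) ⁻¹' s))
      = (P.map Real.ofDigits).map (digitMap b a) s := by
    rw [Measure.map_apply continuous_digitMap.measurable hs,
      Measure.map_apply hm (continuous_digitMap.measurable hs)]
    congr 1
    ext ω
    simp [ofDigits_seqCons]
  calc P.map Real.ofDigits s
      = ∫⁻ a, P (Prod.mk a ⁻¹' ((Real.ofDigits ∘ fun z ↦ seqCons z.1 z.2) ⁻¹' s)) ∂p := by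
        conv_lhs => rw [hP, ← map_seqCons_prod_infinitePi p]
        rw [Measure.map_map hm measurable_seqCons,
          Measure.map_apply (hm.comp measurable_seqCons) hs,
          Measure.prod_apply (hm.comp measurable_seqCons hs)]
    _ = ∑ a : Fin b, ENNReal.ofReal (w a) * (P.map Real.ofDigits).map (digitMap b a) s := by
        simp only [hfiber, hp, lintegral_finsetSum_measure, lintegral_smul_measure,
          lintegral_dirac, smul_eq_mul]
    _ = _ := by
        rw [Fin.sum_univ_eq_sum_range (fun a ↦ ENNReal.ofReal (w a) *
          (P.map Real.ofDigits).map (digitMap b a) s) b]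
        simp only [Measure.finsetSum_apply, Measure.smul_apply, smul_eq_mul]

variable {b : ℕ} {w : ℕ → ℝ} {ν : Measure ℝ} {f : ℝ → ℝ}

namespace IsSelfSimilar

theorem integrable (hν : IsSelfSimilar b w ν) (hf : ContinuousOn f (Icc 0 1)) :
    Integrable f ν :=
  have := hν.isProbabilityMeasure
  integrable_of_continuousOn_Icc hν.ae_mem_Icc hf

theorem integral_eq_sum (hν : IsSelfSimilar b w ν) (hw : ∀ a, 0 ≤ w a)
    (hf : ContinuousOn f (Icc 0 1)) :
    ∫ x, f x ∂ν = ∑ a ∈ Finset.range b, w a * ∫ x, f (digitMap b a x) ∂ν := by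
  have hdm {a : ℕ} : AEMeasurable (digitMap b a) ν := continuous_digitMap.aemeasurable
  have hint {a : ℕ} (ha : a ∈ Finset.range b) : Integrable f (ν.map (digitMap b a)) := by
    have := hν.isProbabilityMeasure
    refine integrable_of_continuousOn_Icc ((ae_map_iff hdm measurableSet_Icc).2 ?_) hf
    filter_upwards [hν.ae_mem_Icc] with x hx using digitMap_mem_Icc (Finset.mem_range.1 ha) hx
  conv_lhs => rw [hν.eq_sum_map, integral_finsetSum_measure
    fun a ha ↦ (hint ha).smul_measure ENNReal.ofReal_ne_top]
  refine Finset.sum_congr rfl fun a ha ↦ ?_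
  rw [integral_smul_measure, ENNReal.toReal_ofReal (hw a), smul_eq_mul,
    integral_map hdm (hint ha).aestronglyMeasurable]

theorem abs_integral_le (hν : IsSelfSimilar b w ν) {C : ℝ} (hC : ∀ x ∈ Icc (0 : ℝ) 1, |f x| ≤ C) :
    |∫ x, f x ∂ν| ≤ C := by
  have := hν.isProbabilityMeasure
  simpa using norm_integral_le_of_norm_le_const (f := f) (hν.ae_mem_Icc.mono hC)

end IsSelfSimilar

end SelfSimilar

section Words

theorem hasSum_list {α M : Type*} [Fintype α] [AddCommMonoid M] [TopologicalSpace M]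
    [ContinuousAdd M] {f : List α → M} {s : α → M}
    (hf : ∀ a, HasSum (fun w ↦ f (a :: w)) (s a)) : HasSum f (f [] + ∑ a, s a) := by
  classical
  have hcons (a : α) : HasSum (fun w : List α ↦ if w.head? = some a then f w else 0) (s a) := by
    refine ((List.cons_injective (a := a)).hasSum_iff ?_).1 (by
      simpa [Function.comp_def] using hf a)
    rintro (_ | ⟨c, w⟩) hw
    · rfl
    · have : c ≠ a := fun h ↦ hw ⟨w, by rw [h]⟩
      simp [this]
  refine ((hasSum_ite_eq [] (f [])).add (hasSum_sum fun a _ ↦ hcons a)).congr_fun ?_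
  rintro (_ | ⟨c, w⟩) <;> simp

/-- The real number `0.a₁a₂…aₗ` in base `b`, for the word `a₁, …, aₗ` of digits. -/
noncomputable def wordValue {b : ℕ} : List (Fin b) → ℝ
  | [] => 0
  | a :: w => digitMap b a (wordValue w)

/-- The weight `b⁻ˡ` of a word of length `l` in which the digit `d` occurs exactly `k` times; all
other words have weight zero. -/
noncomputable def wordMass (b d k : ℕ) (w : List (Fin b)) : ℝ :=
  if (w.map Fin.val).count d = k then ((b : ℝ) ^ w.length)⁻¹ else 0

variable {b d k : ℕ} {a : Fin b} {w : List (Fin b)}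

theorem wordValue_mem_Icc : ∀ w : List (Fin b), wordValue w ∈ Icc (0 : ℝ) 1
  | [] => by simp [wordValue]
  | a :: w => digitMap_mem_Icc a.isLt (wordValue_mem_Icc w)

theorem ofDigits_reverse_map_val :
    ∀ w : List (Fin b), ((Nat.ofDigits b (w.map Fin.val).reverse : ℕ) : ℝ) =
      b ^ w.length * wordValue w
  | [] => by simp [wordValue]
  | a :: w => by
    have hb : (b : ℝ) ≠ 0 := by exact_mod_cast a.pos.ne'
    have ih := ofDigits_reverse_map_val w
    rw [List.map_cons, Nat.ofDigits_reverse_cons]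
    rw [Nat.cast_add, ih, Nat.cast_mul, Nat.cast_pow, wordValue, digitMap,
      List.length_cons, List.length_map]
    field_simp
    ring

theorem wordMass_nonneg : 0 ≤ wordMass b d k w := by
  unfold wordMass
  split_ifs <;> positivity

theorem wordMass_nil : wordMass b d k [] = if k = 0 then 1 else 0 := by
  simp [wordMass, eq_comm]

theorem wordMass_cons_of_ne (h : (a : ℕ) ≠ d) :
    wordMass b d k (a :: w) = (b : ℝ)⁻¹ * wordMass b d k w := by
  simp [wordMass, h, pow_succ]

theorem wordMass_zero_cons (h : (a : ℕ) = d) : wordMass b d 0 (a :: w) = 0 := by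
  simp [wordMass, h]

theorem wordMass_succ_cons (h : (a : ℕ) = d) :
    wordMass b d (k + 1) (a :: w) = (b : ℝ)⁻¹ * wordMass b d k w := by
  simp [wordMass, h, pow_succ]

theorem exists_hasSum_wordMass_of_length_lt (hd : d < b) (L k : ℕ) :
    ∃ m ≤ (b : ℝ),
      HasSum (fun w : List (Fin b) ↦ if w.length < L then wordMass b d k w else 0) m := by
  induction L generalizing k with
  | zero => exact ⟨0, b.cast_nonneg, by simp⟩
  | succ L ih =>
    have hb : (b : ℝ) ≠ 0 := by exact_mod_cast (d.zero_le.trans_lt hd).ne'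
    have hscale (j : ℕ) : ∃ m ≤ (1 : ℝ), HasSum (fun w : List (Fin b) ↦
        if w.length < L then (b : ℝ)⁻¹ * wordMass b d j w else 0) m := by
      obtain ⟨m, hm, hsum⟩ := ih j
      exact ⟨(b : ℝ)⁻¹ * m, (inv_mul_le_one₀ (by positivity)).2 hm, by
        simpa only [mul_ite, mul_zero] using hsum.mul_left (b : ℝ)⁻¹⟩
    have hstep (a : Fin b) : ∃ m ≤ (if k = 0 ∧ a = ⟨d, hd⟩ then 0 else 1 : ℝ),
        HasSum (fun w : List (Fin b) ↦
          if (a :: w).length < L + 1 then wordMass b d k (a :: w) else 0) m := by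
      simp only [List.length_cons, Nat.add_lt_add_iff_right]
      by_cases ha : (a : ℕ) = d
      · rcases k with _ | j
        · exact ⟨0, by split_ifs <;> norm_num, by simp [wordMass_zero_cons ha]⟩
        · simpa [wordMass_succ_cons ha] using hscale j
      · simpa [wordMass_cons_of_ne ha, show a ≠ ⟨d, hd⟩ from fun h ↦ ha (by rw [h])] using hscale k
    choose m hm hsum using hstep
    refine ⟨_, ?_, hasSum_list hsum⟩
    calc (if ([] : List (Fin b)).length < L + 1 then wordMass b d k [] else 0) + ∑ a, m a
        ≤ (if k = 0 then 1 else 0) + ∑ a : Fin b, if k = 0 ∧ a = ⟨d, hd⟩ then 0 else (1 : ℝ) := by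
          gcongr with a
          · simp [wordMass_nil]
          · exact hm a
      _ = b := by
          rcases k with _ | j
          · simp [Finset.sum_ite, Finset.filter_ne', Nat.cast_sub (d.zero_le.trans_lt hd)]
          · simp

theorem summable_wordMass (hd : d < b) (k : ℕ) : Summable (wordMass b d k) := by
  refine summable_of_sum_le (c := b) (fun _ ↦ wordMass_nonneg) fun u ↦ ?_
  obtain ⟨m, hm, hsum⟩ := exists_hasSum_wordMass_of_length_lt hd (u.sup List.length + 1) k
  refine le_trans (le_of_eq (Finset.sum_congr rfl fun w hw ↦ ?_)) ((sum_le_hasSum u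
    (fun w _ ↦ by split_ifs; exacts [wordMass_nonneg, le_rfl]) hsum).trans hm)
  rw [if_pos (Nat.lt_succ_of_le (Finset.le_sup hw))]

end Words

section IrwinMeasure

/-- Burnol's measure `μₖ`: every finite word of `l` digits in which the digit `d` occurs exactly `k`
times puts a mass `b⁻ˡ` on the number `0.a₁…aₗ` it represents. -/
noncomputable def irwinMeasure (b d k : ℕ) : Measure ℝ :=
  .sum fun w : List (Fin b) ↦ ENNReal.ofReal (wordMass b d k w) • .dirac (wordValue w)

variable {b d k : ℕ} {f : ℝ → ℝ}

theorem isFiniteMeasure_irwinMeasure (hd : d < b) : IsFiniteMeasure (irwinMeasure b d k) := ⟨by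
  rw [irwinMeasure, Measure.sum_apply _ .univ]
  simpa using (summable_wordMass hd k).tsum_ofReal_lt_top⟩

theorem ae_mem_Icc_irwinMeasure : ∀ᵐ x ∂irwinMeasure b d k, x ∈ Icc (0 : ℝ) 1 := by
  refine Measure.ae_sum_iff.2 fun w ↦ Measure.ae_smul_measure ?_ _
  exact (ae_dirac_iff measurableSet_Icc).2 (wordValue_mem_Icc w)

theorem integrable_irwinMeasure (hd : d < b) (hf : ContinuousOn f (Icc 0 1)) :
    Integrable f (irwinMeasure b d k) :=
  have := isFiniteMeasure_irwinMeasure (k := k) hd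
  integrable_of_continuousOn_Icc ae_mem_Icc_irwinMeasure hf

theorem hasSum_integral_irwinMeasure (hd : d < b) (hf : ContinuousOn f (Icc 0 1)) :
    HasSum (fun w : List (Fin b) ↦ wordMass b d k w * f (wordValue w))
      (∫ x, f x ∂irwinMeasure b d k) := by
  refine (hasSum_integral_measure (integrable_irwinMeasure hd hf)).congr_fun fun w ↦ ?_
  rw [integral_smul_measure, integral_dirac, ENNReal.toReal_ofReal wordMass_nonneg, smul_eq_mul]

/-- The part of `∫ f ∂μₖ` carried by the empty word and the words with leading digit `d`. -/
noncomputable def leadingIntegral (b d : ℕ) (f : ℝ → ℝ) : ℕ → ℝ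
  | 0 => f 0
  | k + 1 => (b : ℝ)⁻¹ * ∫ x, f (digitMap b d x) ∂irwinMeasure b d k

theorem integral_irwinMeasure_eq (hd : d < b) (hf : ContinuousOn f (Icc 0 1)) :
    ∫ x, f x ∂irwinMeasure b d k = leadingIntegral b d f k + (b : ℝ)⁻¹ *
      ∑ a ∈ (Finset.range b).erase d, ∫ x, f (digitMap b a x) ∂irwinMeasure b d k := by
  have hcomp (a : Fin b) (j : ℕ) : HasSum (fun w ↦ (b : ℝ)⁻¹ * wordMass b d j w *
      f (wordValue (a :: w))) ((b : ℝ)⁻¹ * ∫ x, f (digitMap b a x) ∂irwinMeasure b d j) := by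
    simpa only [mul_assoc, wordValue] using
      (hasSum_integral_irwinMeasure hd (continuousOn_comp_digitMap hf a.isLt)).mul_left (b : ℝ)⁻¹
  let t : ℕ → ℝ := fun a ↦ if a = d then (if k = 0 then 0 else leadingIntegral b d f k)
    else (b : ℝ)⁻¹ * ∫ x, f (digitMap b a x) ∂irwinMeasure b d k
  have hcons (a : Fin b) : HasSum (fun w ↦ wordMass b d k (a :: w) * f (wordValue (a :: w)))
      (t a) := by
    by_cases ha : (a : ℕ) = d
    · rcases k with _ | j
      · simp [t, ha, wordMass_zero_cons ha]
      · simpa [t, ha, wordMass_succ_cons ha, leadingIntegral] using hcomp a j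
    · simpa [t, ha, wordMass_cons_of_ne ha] using hcomp a k
  rw [(hasSum_integral_irwinMeasure hd hf).unique (hasSum_list hcons), Fin.sum_univ_eq_sum_range,
    ← Finset.add_sum_erase _ _ (Finset.mem_range.2 hd), ← add_assoc, Finset.mul_sum]
  congr 1
  · rcases k with _ | j <;> simp [t, wordMass_nil, wordValue, leadingIntegral]
  · exact Finset.sum_congr rfl fun a ha ↦ if_neg (Finset.ne_of_mem_erase ha)

theorem integral_one_irwinMeasure (hd : d < b) : ∫ _, (1 : ℝ) ∂irwinMeasure b d k = b := by
  have hb : (b : ℝ) ≠ 0 := by exact_mod_cast (d.zero_le.trans_lt hd).ne'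
  have key (j : ℕ) (h : leadingIntegral b d (fun _ ↦ 1) j = 1) :
      ∫ _, (1 : ℝ) ∂irwinMeasure b d j = b := by
    have := integral_irwinMeasure_eq (k := j) hd (continuousOn_const (c := (1 : ℝ)))
    rw [h, Finset.sum_const, Finset.card_erase_of_mem (Finset.mem_range.2 hd), Finset.card_range,
      nsmul_eq_mul, Nat.cast_sub (d.zero_le.trans_lt hd)] at this
    field_simp at this
    push_cast at this
    linarith
  induction k with
  | zero => exact key 0 rfl
  | succ k ih => exact key (k + 1) (by rw [leadingIntegral, ih, inv_mul_cancel₀ hb])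

end IrwinMeasure

section IrwinSum

variable {b d k : ℕ}

/-- The term of `irwinSum b d k` at the integer whose base-`b` expansion is the given word, or zero
if the word is empty or has leading digit zero. -/
noncomputable def irwinTerm (b d k : ℕ) : List (Fin b) → ℝ
  | [] => 0
  | a :: w => if (a : ℕ) = 0 then 0 else b * wordMass b d k (a :: w) * (1 / (a + wordValue w))

theorem digits_ofDigits_of_irwinTerm_ne_zero {w : List (Fin b)} (hw : irwinTerm b d k w ≠ 0) :
    Nat.digits b (Nat.ofDigits b (w.map Fin.val).reverse) = (w.map Fin.val).reverse := by
  rcases w with _ | ⟨a, w⟩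
  · simp
  have ha : (a : ℕ) ≠ 0 := fun h ↦ hw (by simp [irwinTerm, h])
  refine Nat.digits_ofDigits b (by lia) _ (fun l hl ↦ ?_) fun _ ↦ by simpa using ha
  obtain ⟨c, -, rfl⟩ := List.mem_map.1 (List.mem_reverse.1 hl)
  exact c.isLt

theorem irwinTerm_map_digits (hb : 1 < b) {m : ℕ} (hm : 0 < m) {w : List (Fin b)}
    (hw : w.map Fin.val = (Nat.digits b m).reverse) :
    irwinTerm b d k w = if (Nat.digits b m).count d = k then (1 : ℝ) / m else 0 := by
  have hN := ofDigits_reverse_map_val w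
  have hcount : (w.map Fin.val).count d = (Nat.digits b m).count d := by rw [hw, List.count_reverse]
  rw [hw, List.reverse_reverse, Nat.ofDigits_digits] at hN
  rcases w with _ | ⟨a, w⟩
  · simp [Nat.digits_eq_nil_iff_eq_zero.1 (List.reverse_eq_nil_iff.1 hw.symm)] at hm
  have ha : (a : ℕ) ≠ 0 := by
    have := Nat.getLast_digit_ne_zero b hm.ne'
    rw [← List.head_reverse (by simp [← hw])] at this
    simpa [← hw] using this
  have hb' : (b : ℝ) ≠ 0 := by positivity
  rw [irwinTerm, if_neg ha, wordMass, hcount, hN, wordValue, digitMap]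
  split_ifs
  · simp only [List.length_cons]
    field_simp
  · simp

theorem irwinSum_eq_of_hasSum (hb : 1 < b) {s : ℝ} (hs : HasSum (irwinTerm b d k) s) :
    irwinSum b d k = s := by
  let N (w : List (Fin b)) : ℕ := Nat.ofDigits b (w.map Fin.val).reverse
  have hN {w : List (Fin b)} (hw : irwinTerm b d k w ≠ 0) :
      w.map Fin.val = (Nat.digits b (N w)).reverse := by
    rw [digits_ofDigits_of_irwinTerm_ne_zero hw, List.reverse_reverse]
  refine ((hasSum_iff_hasSum_of_ne_zero_bij (fun w : Function.support (irwinTerm b d k) ↦ N w)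
    ?_ ?_ ?_).2 hs).tsum_eq
  · rintro ⟨v, hv⟩ ⟨w, hw⟩ (hvw : N v = N w)
    refine Subtype.ext (List.map_injective_iff.2 Fin.val_injective ?_)
    rw [hN hv, hN hw, hvw]
  · intro m hm
    obtain ⟨⟨hm0, -⟩, -⟩ := ite_ne_right_iff.1 hm
    obtain ⟨w, hw⟩ : ∃ w : List (Fin b), w.map Fin.val = (Nat.digits b m).reverse :=
      CanLift.prf _ fun l hl ↦ Nat.digits_lt_base hb (List.mem_reverse.1 hl)
    refine ⟨⟨w, ?_⟩, by simp [N, hw, Nat.ofDigits_digits]⟩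
    rw [Function.mem_support, irwinTerm_map_digits hb hm0 hw]
    simpa [hm0] using hm
  · rintro ⟨w, hw⟩
    have hpos : 0 < N w := by
      refine Nat.pos_of_ne_zero fun h ↦ hw ?_
      rw [show w = [] by simpa [h] using hN hw, irwinTerm]
    rw [irwinTerm_map_digits hb hpos (hN hw)]
    simp [hpos]

theorem irwinSum_succ_eq (hb : 1 < b) (hd : d < b) :
    irwinSum b d (k + 1) = ∑ a ∈ Finset.Ico 1 b,
      ∫ x, 1 / (a + x) ∂irwinMeasure b d (if a = d then k else k + 1) := by
  have hb' : (b : ℝ) ≠ 0 := by positivity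
  have hcont {a : ℕ} (ha : a ≠ 0) : ContinuousOn (fun x : ℝ ↦ 1 / (a + x)) (Icc 0 1) :=
    continuousOn_const.div (by fun_prop) fun x hx ↦ by
      have : (0 : ℝ) < a := by positivity
      linarith [hx.1]
  let t : ℕ → ℝ := fun a ↦ if a = 0 then 0 else
    ∫ x, 1 / (a + x) ∂irwinMeasure b d (if a = d then k else k + 1)
  have hcons (a : Fin b) : HasSum (fun w ↦ irwinTerm b d (k + 1) (a :: w)) (t a) := by
    by_cases ha : (a : ℕ) = 0
    · simp [irwinTerm, t, ha]
    · simp only [irwinTerm, t, if_neg ha]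
      refine (hasSum_integral_irwinMeasure hd (hcont ha)).congr_fun fun w ↦ ?_
      split_ifs with had
      · rw [wordMass_succ_cons had, mul_inv_cancel_left₀ hb']
      · rw [wordMass_cons_of_ne had, mul_inv_cancel_left₀ hb']
  rw [irwinSum_eq_of_hasSum hb (hasSum_list hcons), Fin.sum_univ_eq_sum_range, irwinTerm, zero_add,
    Finset.range_eq_Ico, Finset.sum_eq_sum_Ico_succ_bot (by lia)]
  simp only [t, if_true, zero_add]
  exact Finset.sum_congr rfl fun a ha ↦ if_neg (by simp at ha; lia)

end IrwinSum

section DerivBounds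

/-- `f` is `n` times continuously differentiable at every point of `[0, 1]`, and its `n`-th
derivative is bounded by `M` there. -/
structure HasDerivBound (n : ℕ) (f : ℝ → ℝ) (M : ℝ) : Prop where
  contDiffAt : ∀ x ∈ Icc (0 : ℝ) 1, ContDiffAt ℝ n f x
  abs_iteratedDeriv_le : ∀ x ∈ Icc (0 : ℝ) 1, |iteratedDeriv n f x| ≤ M

variable {b a n : ℕ} {f : ℝ → ℝ} {M x s t : ℝ}

theorem iteratedDeriv_comp_digitMap :
    iteratedDeriv n (fun x ↦ f (digitMap b a x))
      = fun x ↦ ((b : ℝ)⁻¹) ^ n * iteratedDeriv n f (digitMap b a x) := by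
  induction n with
  | zero => simp
  | succ n ih =>
    ext x
    rw [iteratedDeriv_succ, ih, deriv_const_mul_field, deriv_comp_digitMap, ← iteratedDeriv_succ]
    ring

namespace HasDerivBound

theorem comp_digitMap (hf : HasDerivBound n f M) (ha : a < b) :
    HasDerivBound n (fun x ↦ f (digitMap b a x)) ((b : ℝ)⁻¹ ^ n * M) where
  contDiffAt x hx := (hf.contDiffAt _ (digitMap_mem_Icc ha hx)).comp x contDiff_digitMap.contDiffAt
  abs_iteratedDeriv_le x hx := by
    rw [iteratedDeriv_comp_digitMap, abs_mul, abs_of_nonneg (by positivity)]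
    gcongr
    exact hf.abs_iteratedDeriv_le _ (digitMap_mem_Icc ha hx)

theorem nonneg (hf : HasDerivBound n f M) : 0 ≤ M :=
  (abs_nonneg _).trans (hf.abs_iteratedDeriv_le 0 (by simp))

theorem mono {N : ℝ} (hf : HasDerivBound n f M) (hMN : M ≤ N) : HasDerivBound n f N :=
  ⟨hf.contDiffAt, fun x hx ↦ (hf.abs_iteratedDeriv_le x hx).trans hMN⟩

theorem continuousOn (hf : HasDerivBound n f M) : ContinuousOn f (Icc 0 1) :=
  fun x hx ↦ (hf.contDiffAt x hx).continuousAt.continuousWithinAt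

theorem deriv (hf : HasDerivBound (n + 1) f M) : HasDerivBound n (deriv f) M where
  contDiffAt x hx := (hf.contDiffAt x hx).derivWithin (mod_cast le_rfl)
  abs_iteratedDeriv_le x hx := by
    rw [← iteratedDeriv_succ']
    exact hf.abs_iteratedDeriv_le x hx

theorem abs_sub_taylor_le (hf : HasDerivBound (n + 1) f M) (hs : s ∈ Icc (0 : ℝ) 1)
    (ht : t ∈ Icc (0 : ℝ) 1) :
    |f t - ∑ i ∈ Finset.range (n + 1), iteratedDeriv i f s * (t - s) ^ i / i !|
      ≤ M * |t - s| ^ (n + 1) / (n + 1)! := by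
  have hst : uIcc s t ⊆ Icc 0 1 := ordConnected_Icc.uIcc_subset hs ht
  rcases eq_or_ne s t with rfl | hne
  · simp [Finset.sum_range_succ']
  have hcd : ContDiffOn ℝ (n + 1) f (uIcc s t) := fun x hx ↦
    (hf.contDiffAt x (hst hx)).contDiffWithinAt
  obtain ⟨ξ, hξ, h⟩ := taylor_mean_remainder_lagrange_iteratedDeriv hne hcd
  have htaylor : taylorWithinEval f n (uIcc s t) s t
      = ∑ i ∈ Finset.range (n + 1), iteratedDeriv i f s * (t - s) ^ i / i ! := by
    rw [taylor_within_apply]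
    refine Finset.sum_congr rfl fun i hi ↦ ?_
    rw [iteratedDerivWithin_eq_iteratedDeriv (uniqueDiffOn_uIcc hne)
      ((hf.contDiffAt s hs).of_le (mod_cast (Finset.mem_range.1 hi).le)) left_mem_uIcc, smul_eq_mul]
    ring
  rw [← htaylor, h, abs_div, abs_mul, abs_pow, Nat.abs_cast]
  gcongr
  exact hf.abs_iteratedDeriv_le ξ (hst (uIoo_subset_uIcc_self hξ))

theorem of_succ (hf : HasDerivBound (n + 1) f M) :
    HasDerivBound n f (|iteratedDeriv n f 0| + M) where
  contDiffAt x hx := (hf.contDiffAt x hx).of_le (mod_cast n.le_succ)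
  abs_iteratedDeriv_le := by
    induction n generalizing f with
    | zero =>
      intro x hx
      have h : |f x - f 0| ≤ M * |x| := by
        simpa using hf.abs_sub_taylor_le (s := 0) (by simp) hx
      have hxM := mul_le_of_le_one_right hf.nonneg (abs_le.2 ⟨by linarith [hx.1], hx.2⟩)
      simpa using (abs_add_le (f 0) (f x - f 0)).trans (by gcongr; exact h.trans hxM)
    | succ n ih => simpa only [iteratedDeriv_succ'] using ih hf.deriv

end HasDerivBound

end DerivBounds

section Lebesgue

variable {b a : ℕ} {f : ℝ → ℝ}

theorem integral_digitMap : ∫ x in (0 : ℝ)..1, digitMap b a x = (a + 1 / 2) / b := by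
  simp only [digitMap, intervalIntegral.integral_div]
  rw [intervalIntegral.integral_add (by simp) (by simp)]
  simp

theorem integral_comp_digitMap (hb : 0 < b) :
    ∫ x in (0 : ℝ)..1, f (digitMap b a x)
      = b * ∫ x in (a / b : ℝ)..((a + 1 : ℕ) / b : ℝ), f x := by
  have := intervalIntegral.integral_comp_add_div (a := 0) (b := 1) f
    (c := (b : ℝ)) (by positivity) (a / b : ℝ)
  simpa [digitMap, add_div] using this

theorem integral_eq_sum_digitMap (hb : 0 < b) (hf : ContinuousOn f (Icc 0 1)) :
    ∫ x in (0 : ℝ)..1, f x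
      = (b : ℝ)⁻¹ * ∑ a ∈ Finset.range b, ∫ x in (0 : ℝ)..1, f (digitMap b a x) := by
  have hb' : (0 : ℝ) < b := by positivity
  have hint (a : ℕ) (ha : a < b) :
      IntervalIntegrable f volume (a / b : ℝ) ((a + 1 : ℕ) / b : ℝ) := by
    refine (hf.mono (ordConnected_Icc.uIcc_subset ⟨by positivity, ?_⟩
      ⟨by positivity, ?_⟩)).intervalIntegrable <;> rw [div_le_one hb'] <;> exact_mod_cast by lia
  simp only [integral_comp_digitMap hb, ← Finset.mul_sum]
  rw [inv_mul_cancel_left₀ hb'.ne', intervalIntegral.sum_integral_adjacent_intervals hint]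
  simp [hb'.ne']

theorem sum_integral_one_div_add (hb : 0 < b) :
    ∑ a ∈ Finset.Ico 1 b, ∫ x in (0 : ℝ)..1, 1 / (a + x) = Real.log b := by
  have hshift (a : ℕ) :
      ∫ x in (0 : ℝ)..1, 1 / (a + x) = ∫ x in (a : ℝ)..(a + 1 : ℕ), 1 / x := by
    simp [intervalIntegral.integral_comp_add_left (fun y : ℝ ↦ y⁻¹)]
  simp only [hshift]
  rw [intervalIntegral.sum_integral_adjacent_intervals_Ico (a := fun n : ℕ ↦ (n : ℝ)) hb,
    Nat.cast_one, integral_one_div_of_pos one_pos (by positivity), div_one]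
  intro a ha
  refine intervalIntegral.intervalIntegrable_one_div (fun x hx ↦ ?_) continuousOn_id
  have h1 : (1 : ℝ) ≤ a := by exact_mod_cast ha.1
  rw [uIcc_of_le (by simp)] at hx
  exact (lt_of_lt_of_le (by linarith) hx.1).ne'

theorem abs_intervalIntegral_zero_one_le {C : ℝ} (hC : ∀ x ∈ Icc (0 : ℝ) 1, |f x| ≤ C) :
    |∫ x in (0 : ℝ)..1, f x| ≤ C := by
  have := intervalIntegral.norm_integral_le_of_norm_le_const (a := 0) (b := 1) (f := f) (C := C)
    fun x hx ↦ hC x (Ioc_subset_Icc_self (by rwa [uIoc_of_le zero_le_one] at hx))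
  simpa using this

end Lebesgue

section Defect

/-- The digit distribution of the self-similar law governing the first-order deviation of
`irwinMeasure b d k` from `b` times Lebesgue measure. -/
noncomputable def tiltedWeight (b d a : ℕ) : ℝ :=
  ((b : ℝ) ^ 2)⁻¹ + if a = d then 1 - (b : ℝ)⁻¹ else 0

/-- The ratio by which the deviation of `irwinMeasure b d k` from `b` times Lebesgue measure shrinks
when `k` increases by one. -/
noncomputable def decayRate (b : ℕ) : ℝ := ((b : ℝ) ^ 2 - b + 1)⁻¹

/-- The error of the approximation of `irwinMeasure b d k`, as a functional, by `b` times Lebesgue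
measure plus a multiple of the derivative of `ν`. -/
noncomputable def irwinDefect (b d k : ℕ) (ν : Measure ℝ) (f : ℝ → ℝ) : ℝ :=
  ∫ x, f x ∂irwinMeasure b d k - b * (∫ x in (0 : ℝ)..1, f x)
    + b * (d + 1 / 2) * decayRate b ^ (k + 1) * ∫ x, deriv f x ∂ν

/-- The inhomogeneous term of the recursion satisfied by `irwinDefect b d k ν`. -/
noncomputable def irwinSource (b d k : ℕ) (ν : Measure ℝ) (f : ℝ → ℝ) : ℝ :=
  leadingIntegral b d f k - (∫ x in (0 : ℝ)..1, f (digitMap b d x))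
    + (d + 1 / 2) * decayRate b ^ k * ∫ x, deriv (fun x ↦ f (digitMap b d x)) x ∂ν

variable {b d k : ℕ} {ν : Measure ℝ} {f g : ℝ → ℝ} {M N K c : ℝ}

theorem tiltedWeight_nonneg (hb : 0 < b) (a : ℕ) : 0 ≤ tiltedWeight b d a := by
  have hinv : (b : ℝ)⁻¹ ≤ 1 := inv_le_one_of_one_le₀ (by exact_mod_cast hb)
  refine add_nonneg (by positivity) ?_
  split_ifs
  · exact sub_nonneg.2 hinv
  · exact le_rfl

theorem sum_tiltedWeight (hd : d < b) : ∑ a ∈ Finset.range b, tiltedWeight b d a = 1 := by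
  have hb : (b : ℝ) ≠ 0 := by exact_mod_cast (d.zero_le.trans_lt hd).ne'
  simp only [tiltedWeight, Finset.sum_add_distrib, Finset.sum_const, Finset.card_range,
    Finset.sum_ite_eq', Finset.mem_range, hd, if_true, nsmul_eq_mul]
  field_simp
  ring

theorem sq_sub_add_one_pos (x : ℝ) : 0 < x ^ 2 - x + 1 := by nlinarith [sq_nonneg (x - 1 / 2)]

theorem decayRate_pos : 0 < decayRate b := inv_pos.2 (sq_sub_add_one_pos b)

theorem decayRate_mul_tiltedWeight (hb : 0 < b) :
    decayRate b * tiltedWeight b d d = ((b : ℝ) ^ 2)⁻¹ := by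
  rw [decayRate, inv_mul_eq_iff_eq_mul₀ (sq_sub_add_one_pos b).ne', tiltedWeight, if_pos rfl]
  field_simp
  ring

theorem irwinDefect_eq (hd : d < b) (hν : IsSelfSimilar b (tiltedWeight b d) ν)
    (hf : HasDerivBound 1 f M) :
    irwinDefect b d k ν f = (b : ℝ)⁻¹ * ∑ a ∈ (Finset.range b).erase d,
      irwinDefect b d k ν (fun x ↦ f (digitMap b a x)) + irwinSource b d k ν f := by
  have hb : 0 < b := d.zero_le.trans_lt hd
  have hmem := Finset.mem_range.2 hd
  have hν_sum : b * decayRate b * ∫ x, deriv f x ∂ν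
      = decayRate b * ∑ a ∈ (Finset.range b).erase d, ∫ x, deriv (fun x ↦ f (digitMap b a x)) x ∂ν
        + ∫ x, deriv (fun x ↦ f (digitMap b d x)) x ∂ν := by
    rw [hν.integral_eq_sum (tiltedWeight_nonneg hb) hf.deriv.continuousOn,
      ← Finset.add_sum_erase _ _ hmem, mul_add, add_comm, Finset.mul_sum, Finset.mul_sum]
    simp only [deriv_comp_digitMap, integral_const_mul]
    congr 1
    · refine Finset.sum_congr rfl fun a ha ↦ ?_
      rw [tiltedWeight, if_neg (Finset.ne_of_mem_erase ha)]
      field_simp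
      simp
    · rw [← mul_assoc, mul_assoc (b : ℝ), decayRate_mul_tiltedWeight hb]
      field_simp
  have hleb := integral_eq_sum_digitMap hb hf.continuousOn
  rw [← Finset.add_sum_erase _ _ hmem] at hleb
  simp only [irwinDefect, irwinSource, Finset.sum_add_distrib, Finset.sum_sub_distrib,
    ← Finset.mul_sum]
  rw [integral_irwinMeasure_eq hd hf.continuousOn, hleb, pow_succ]
  field_simp
  linear_combination b * (2 * d + 1) * decayRate b ^ k * hν_sum

theorem irwinSource_succ (hb : 0 < b) :
    irwinSource b d (k + 1) ν f
      = (b : ℝ)⁻¹ * irwinDefect b d k ν (fun x ↦ f (digitMap b d x)) := by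
  have hb' : (b : ℝ) ≠ 0 := by positivity
  rw [irwinSource, irwinDefect, leadingIntegral]
  field_simp

theorem hasDerivBound_affine (α β : ℝ) : HasDerivBound 1 (fun x ↦ α + β * x) |β| where
  contDiffAt _ _ := by fun_prop
  abs_iteratedDeriv_le x _ := by simp [iteratedDeriv_one]

theorem irwinDefect_sub (hd : d < b) (hν : IsSelfSimilar b (tiltedWeight b d) ν)
    (hf : HasDerivBound 1 f M) (hg : HasDerivBound 1 g N) :
    irwinDefect b d k ν (fun x ↦ f x - g x) = irwinDefect b d k ν f - irwinDefect b d k ν g := by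
  have hderiv : ∫ x, deriv (fun x ↦ f x - g x) x ∂ν = ∫ x, deriv f x ∂ν - ∫ x, deriv g x ∂ν := by
    rw [← integral_sub (hν.integrable hf.deriv.continuousOn)
      (hν.integrable hg.deriv.continuousOn)]
    refine integral_congr_ae (hν.ae_mem_Icc.mono fun x hx ↦ ?_)
    exact deriv_fun_sub ((hf.contDiffAt x hx).differentiableAt (by simp))
      ((hg.contDiffAt x hx).differentiableAt (by simp))
  have hint {h : ℝ → ℝ} (hh : ContinuousOn h (Icc 0 1)) : IntervalIntegrable h volume 0 1 :=
    (hh.mono (by rw [uIcc_of_le zero_le_one])).intervalIntegrable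
  rw [irwinDefect, hderiv, integral_sub (integrable_irwinMeasure hd hf.continuousOn)
    (integrable_irwinMeasure hd hg.continuousOn),
    intervalIntegral.integral_sub (hint hf.continuousOn) (hint hg.continuousOn), irwinDefect,
    irwinDefect]
  ring

theorem irwinDefect_affine_eq_mul (hd : d < b) (hν : IsSelfSimilar b (tiltedWeight b d) ν)
    (α β : ℝ) :
    irwinDefect b d k ν (fun x ↦ α + β * x) = β * irwinDefect b d k ν (fun x ↦ x) := by
  have := hν.isProbabilityMeasure
  have hmass : ∫ _, α ∂irwinMeasure b d k = α * b := by
    rw [← integral_one_irwinMeasure (k := k) hd, ← integral_const_mul, mul_one]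
  have hint : Integrable (fun x ↦ β * x) (irwinMeasure b d k) :=
    integrable_irwinMeasure hd (by fun_prop)
  have hderiv : deriv (fun x : ℝ ↦ α + β * x) = fun _ ↦ β := by
    ext x
    simp
  rw [irwinDefect, irwinDefect, hderiv, show deriv (fun x : ℝ ↦ x) = fun _ ↦ 1 from deriv_id',
    integral_add (integrable_irwinMeasure hd continuousOn_const) hint, hmass,
    intervalIntegral.integral_add (by simp) (Continuous.intervalIntegrable (by fun_prop) _ _),
    integral_const_mul β fun x ↦ x, intervalIntegral.integral_const_mul β fun x ↦ x]
  simp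
  ring

theorem irwinSource_zero_id (hν : IsSelfSimilar b (tiltedWeight b d) ν) :
    irwinSource b d 0 ν (fun x ↦ x) = 0 := by
  have := hν.isProbabilityMeasure
  have hderiv : deriv (digitMap b d) = fun _ ↦ (b : ℝ)⁻¹ := by
    unfold digitMap
    ext x
    simp
  simp [irwinSource, leadingIntegral, integral_digitMap, hderiv, div_eq_mul_inv]

theorem irwinDefect_affine (hd : d < b) (hν : IsSelfSimilar b (tiltedWeight b d) ν) (α β : ℝ) :
    irwinDefect b d k ν (fun x ↦ α + β * x) = 0 := by
  have hb : (0 : ℝ) < b := by exact_mod_cast d.zero_le.trans_lt hd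
  have hcomp (j a : ℕ) : irwinDefect b d j ν (digitMap b a)
      = (b : ℝ)⁻¹ * irwinDefect b d j ν (fun x ↦ x) := by
    rw [← irwinDefect_affine_eq_mul hd hν (a / b)]
    congr 1
    ext x
    rw [digitMap]
    ring
  have hid_of_source (j : ℕ) (h : irwinSource b d j ν (fun x ↦ x) = 0) :
      irwinDefect b d j ν (fun x ↦ x) = 0 := by
    have hrec := irwinDefect_eq (k := j) (f := fun x ↦ x) hd hν
      (by simpa using hasDerivBound_affine 0 1)
    simp only [hcomp, h, Finset.sum_const, Finset.card_erase_of_mem (Finset.mem_range.2 hd),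
      Finset.card_range, nsmul_eq_mul, Nat.cast_pred (d.zero_le.trans_lt hd)] at hrec
    field_simp at hrec
    refine (mul_eq_zero.1 ?_).resolve_left (sq_sub_add_one_pos (b : ℝ)).ne'
    linear_combination hrec
  rw [irwinDefect_affine_eq_mul hd hν, mul_eq_zero]
  right
  induction k with
  | zero => exact hid_of_source 0 (irwinSource_zero_id hν)
  | succ k ih =>
    exact hid_of_source (k + 1) <| by
      rw [irwinSource_succ (by lia), hcomp, ih, mul_zero, mul_zero]

/-- The remainder of the first-order Taylor expansion of `f` at zero. -/
noncomputable def affineRemainder (f : ℝ → ℝ) (x : ℝ) : ℝ := f x - (f 0 + deriv f 0 * x)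

theorem abs_affineRemainder_le (hf : HasDerivBound 2 f M) {x : ℝ} (hx : x ∈ Icc (0 : ℝ) 1) :
    |affineRemainder f x| ≤ M * x ^ 2 / 2 := by
  simpa [Finset.sum_range_succ, affineRemainder, iteratedDeriv_one] using
    hf.abs_sub_taylor_le (s := 0) (by simp) hx

theorem deriv_affineRemainder (hf : HasDerivBound 2 f M) {x : ℝ} (hx : x ∈ Icc (0 : ℝ) 1) :
    deriv (affineRemainder f) x = deriv f x - deriv f 0 := by
  unfold affineRemainder
  rw [deriv_fun_sub ((hf.contDiffAt x hx).differentiableAt (by simp)) (by fun_prop)]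
  simp

theorem abs_deriv_sub_deriv_zero_le (hf : HasDerivBound 2 f M) {x : ℝ}
    (hx : x ∈ Icc (0 : ℝ) 1) : |deriv f x - deriv f 0| ≤ M * x := by
  simpa [abs_of_nonneg hx.1] using hf.deriv.abs_sub_taylor_le (s := 0) (by simp) hx

theorem irwinDefect_affineRemainder (hd : d < b) (hν : IsSelfSimilar b (tiltedWeight b d) ν)
    (hf : HasDerivBound 1 f M) :
    irwinDefect b d k ν (affineRemainder f) = irwinDefect b d k ν f := by
  unfold affineRemainder
  rw [irwinDefect_sub hd hν hf (hasDerivBound_affine _ _), irwinDefect_affine hd hν, sub_zero]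

theorem abs_irwinDefect_le_crude (hd : d < b) (hν : IsSelfSimilar b (tiltedWeight b d) ν)
    (hf : HasDerivBound 2 f M) :
    |irwinDefect b d k ν f| ≤ (b + b * (d + 1 / 2) * decayRate b ^ (k + 1)) * M := by
  have hfin := isFiniteMeasure_irwinMeasure (k := k) hd
  have hsmall {x : ℝ} (hx : x ∈ Icc (0 : ℝ) 1) : |affineRemainder f x| ≤ M / 2 := by
    refine (abs_affineRemainder_le hf hx).trans ?_
    gcongr
    exact mul_le_of_le_one_right hf.nonneg (pow_le_one₀ hx.1 hx.2)
  have hμ : |∫ x, affineRemainder f x ∂irwinMeasure b d k| ≤ M / 2 * b := by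
    have hmass := integral_one_irwinMeasure (k := k) hd
    rw [integral_const, smul_eq_mul, mul_one] at hmass
    rw [← hmass]
    exact norm_integral_le_of_norm_le_const (f := affineRemainder f)
      (ae_mem_Icc_irwinMeasure.mono fun x ↦ hsmall)
  have hleb : |∫ x in (0 : ℝ)..1, affineRemainder f x| ≤ M / 2 :=
    abs_intervalIntegral_zero_one_le fun x ↦ hsmall
  have hderiv : |∫ x, deriv (affineRemainder f) x ∂ν| ≤ M := hν.abs_integral_le fun x hx ↦ by
    rw [deriv_affineRemainder hf hx]
    exact (abs_deriv_sub_deriv_zero_le hf hx).trans (mul_le_of_le_one_right hf.nonneg hx.2)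
  have hcoef : (0 : ℝ) ≤ b * (d + 1 / 2) * decayRate b ^ (k + 1) := by
    have := decayRate_pos (b := b)
    positivity
  rw [← irwinDefect_affineRemainder hd hν hf.of_succ, irwinDefect]
  rw [abs_le] at *
  constructor <;> nlinarith [(b.cast_nonneg : (0 : ℝ) ≤ b)]

theorem abs_irwinDefect_le_contraction (hd : d < b) (hb : 2 ≤ b)
    (hν : IsSelfSimilar b (tiltedWeight b d) ν)
    (hK : ∀ f M, HasDerivBound 2 f M → |irwinDefect b d k ν f| ≤ K * M)
    (hf : HasDerivBound 2 f M) :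
    |irwinDefect b d k ν f| ≤ K * M / 4 + |irwinSource b d k ν f| := by
  have hb' : (2 : ℝ) ≤ b := by exact_mod_cast hb
  have hKM : 0 ≤ K * M := (abs_nonneg _).trans (hK f M hf)
  have hterm (a : ℕ) (ha : a ∈ (Finset.range b).erase d) :
      |irwinDefect b d k ν fun x ↦ f (digitMap b a x)| ≤ (b : ℝ)⁻¹ ^ 2 * (K * M) :=
    (hK _ _ (hf.comp_digitMap (Finset.mem_range.1 (Finset.mem_of_mem_erase ha)))).trans_eq
      (by ring)
  have hcard : ((Finset.range b).erase d).card ≤ b := by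
    simpa using Finset.card_erase_le (s := Finset.range b) (a := d)
  rw [irwinDefect_eq hd hν hf.of_succ]
  refine (abs_add_le _ _).trans (add_le_add_left ?_ _)
  rw [abs_mul, abs_of_nonneg (inv_nonneg.2 b.cast_nonneg)]
  calc (b : ℝ)⁻¹ * |∑ a ∈ (Finset.range b).erase d,
        irwinDefect b d k ν fun x ↦ f (digitMap b a x)|
      ≤ (b : ℝ)⁻¹ * (b * ((b : ℝ)⁻¹ ^ 2 * (K * M))) := by
        gcongr
        refine (Finset.abs_sum_le_sum_abs _ _).trans
          ((Finset.sum_le_card_nsmul _ _ _ hterm).trans ?_)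
        rw [nsmul_eq_mul]
        gcongr
    _ = K * M / b ^ 2 := by field_simp
    _ ≤ K * M / 4 := by
        gcongr
        nlinarith

theorem abs_irwinDefect_le_of_source (hd : d < b) (hb : 2 ≤ b)
    (hν : IsSelfSimilar b (tiltedWeight b d) ν)
    (hsource : ∀ f M, HasDerivBound 2 f M → |irwinSource b d k ν f| ≤ c * M)
    (hf : HasDerivBound 2 f M) : |irwinDefect b d k ν f| ≤ 2 * c * M := by
  obtain ⟨K, hK⟩ : ∃ K : ℝ, ∀ f M, HasDerivBound 2 f M → |irwinDefect b d k ν f| ≤ K * M :=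
    ⟨_, fun f M hf ↦ abs_irwinDefect_le_crude hd hν hf⟩
  have hiter (n : ℕ) : ∀ f M, HasDerivBound 2 f M →
      |irwinDefect b d k ν f| ≤ (K / 4 ^ n + 2 * c) * M := by
    induction n with
    | zero =>
      intro f M hf
      have hcM : 0 ≤ c * M := (abs_nonneg _).trans (hsource f M hf)
      rw [pow_zero, div_one]
      linarith [hK f M hf]
    | succ n ih =>
      intro f M hf
      have hcM : 0 ≤ c * M := (abs_nonneg _).trans (hsource f M hf)
      refine (abs_irwinDefect_le_contraction hd hb hν ih hf).trans ?_
      rw [pow_succ, ← div_div]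
      linarith [hsource f M hf]
  have hlim : Filter.Tendsto (fun n : ℕ ↦ (K / 4 ^ n + 2 * c) * M) .atTop
      (nhds ((0 + 2 * c) * M)) :=
    ((tendsto_const_nhds.div_atTop (tendsto_pow_atTop_atTop_of_one_lt (by norm_num))).add_const
      _).mul_const _
  rw [zero_add] at hlim
  exact ge_of_tendsto' hlim fun n ↦ hiter n f M hf

theorem irwinSource_zero_eq (hd : d < b) (hf : HasDerivBound 1 f M)
    (hν : IsSelfSimilar b (tiltedWeight b d) ν) :
    irwinSource b d 0 ν f = (d + 1 / 2) * ∫ x, (b : ℝ)⁻¹ * (deriv f (digitMap b d x) - deriv f 0) ∂ν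
      - ∫ x in (0 : ℝ)..1, affineRemainder f (digitMap b d x) := by
  have := hν.isProbabilityMeasure
  have hdigit : ∫ x in (0 : ℝ)..1, (f 0 + deriv f 0 * digitMap b d x)
      = f 0 + deriv f 0 * ((d + 1 / 2) / b) := by
    have hint : IntervalIntegrable (digitMap b d) volume 0 1 :=
      continuous_digitMap.intervalIntegrable 0 1
    rw [intervalIntegral.integral_add (by simp) (hint.const_mul _),
      intervalIntegral.integral_const_mul]
    simp [integral_digitMap]
  have hf_int : IntervalIntegrable (fun x ↦ f (digitMap b d x)) volume 0 1 := by
    refine ContinuousOn.intervalIntegrable ?_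
    rw [uIcc_of_le zero_le_one]
    exact continuousOn_comp_digitMap hf.continuousOn hd
  have haff_int : IntervalIntegrable (fun x ↦ f 0 + deriv f 0 * digitMap b d x) volume 0 1 := by
    have := continuous_digitMap (b := b) (a := d)
    exact Continuous.intervalIntegrable (by fun_prop) 0 1
  have hderiv_int : Integrable (fun x ↦ deriv f (digitMap b d x)) ν :=
    hν.integrable (continuousOn_comp_digitMap hf.deriv.continuousOn hd)
  rw [irwinSource, leadingIntegral, deriv_comp_digitMap]
  simp only [affineRemainder, integral_const_mul]
  rw [integral_sub hderiv_int (by simp), intervalIntegral.integral_sub hf_int haff_int, hdigit]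
  simp
  ring

theorem abs_irwinSource_zero_le (hd : d < b) (hν : IsSelfSimilar b (tiltedWeight b d) ν)
    (hf : HasDerivBound 2 f M) :
    |irwinSource b d 0 ν f| ≤ 2 * (d + 1) ^ 2 / b ^ 2 * M := by
  have hM := hf.nonneg
  have hdigit {x : ℝ} (hx : x ∈ Icc (0 : ℝ) 1) : digitMap b d x ≤ (d + 1) / b := by
    unfold digitMap
    gcongr
    exact hx.2
  have hleb : |∫ x in (0 : ℝ)..1, affineRemainder f (digitMap b d x)|
      ≤ M * ((d + 1) / b) ^ 2 / 2 := abs_intervalIntegral_zero_one_le fun x hx ↦ by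
    have hmem := digitMap_mem_Icc hd hx
    refine (abs_affineRemainder_le hf hmem).trans ?_
    gcongr
    exacts [hmem.1, hdigit hx]
  have hderiv : |∫ x, (b : ℝ)⁻¹ * (deriv f (digitMap b d x) - deriv f 0) ∂ν|
      ≤ (b : ℝ)⁻¹ * (M * ((d + 1) / b)) := hν.abs_integral_le fun x hx ↦ by
    rw [abs_mul, abs_of_nonneg (inv_nonneg.2 b.cast_nonneg)]
    gcongr
    exact (abs_deriv_sub_deriv_zero_le hf (digitMap_mem_Icc hd hx)).trans (by
      gcongr
      exact hdigit hx)
  rw [irwinSource_zero_eq hd hf.of_succ hν]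
  refine (abs_sub _ _).trans ?_
  rw [abs_mul, abs_of_nonneg (by positivity)]
  calc (d + 1 / 2) * |∫ x, (b : ℝ)⁻¹ * (deriv f (digitMap b d x) - deriv f 0) ∂ν|
        + |∫ x in (0 : ℝ)..1, affineRemainder f (digitMap b d x)|
      ≤ (d + 1) * ((b : ℝ)⁻¹ * (M * ((d + 1) / b))) + M * ((d + 1) / b) ^ 2 / 2 := by
        gcongr
        norm_num
    _ = 3 / 2 * ((d + 1) ^ 2 / b ^ 2 * M) := by
        field_simp
        ring
    _ ≤ 2 * (d + 1) ^ 2 / b ^ 2 * M := by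
        rw [mul_div_assoc, mul_assoc]
        gcongr
        norm_num

theorem abs_irwinDefect_le (hd : d < b) (hb : 2 ≤ b) (hν : IsSelfSimilar b (tiltedWeight b d) ν)
    (hf : HasDerivBound 2 f M) :
    |irwinDefect b d k ν f| ≤ 4 * (d + 1) ^ 2 / b ^ 2 * (2 / b ^ 3) ^ k * M := by
  induction k generalizing f M with
  | zero =>
    refine (abs_irwinDefect_le_of_source hd hb hν
      (fun f M hf ↦ abs_irwinSource_zero_le hd hν hf) hf).trans_eq (by ring)
  | succ k ih =>
    refine (abs_irwinDefect_le_of_source (c := 4 * (d + 1) ^ 2 / b ^ 2 * (2 / b ^ 3) ^ k / b ^ 3)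
      hd hb hν (fun f M hf ↦ ?_) hf).trans_eq (by ring)
    rw [irwinSource_succ (by lia), abs_mul, abs_of_nonneg (by positivity)]
    refine (mul_le_mul_of_nonneg_left (ih (hf.comp_digitMap hd)) (by positivity)).trans_eq ?_
    field_simp

end Defect

section Reciprocal

variable {a b d k : ℕ} {ν : Measure ℝ}

theorem iteratedDeriv_one_div_add (a : ℝ) (n : ℕ) :
    iteratedDeriv n (fun x : ℝ ↦ 1 / (a + x)) = fun x ↦ (-1) ^ n * n ! / (a + x) ^ (n + 1) := by
  have h := iter_deriv_inv_linear n (1 : ℝ) a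
  simp only [one_mul, one_pow, mul_one, add_comm _ a] at h
  simp only [one_div, iteratedDeriv_eq_iterate, h]
  ext x
  rw [← neg_add', zpow_neg, div_eq_mul_inv, add_comm (1 : ℤ)]
  norm_cast

theorem hasDerivBound_one_div_add (ha : 1 ≤ a) (n : ℕ) :
    HasDerivBound n (fun x : ℝ ↦ 1 / (a + x)) (n ! / a ^ (n + 1)) := by
  have ha' : (0 : ℝ) < a := by exact_mod_cast ha
  refine ⟨fun x hx ↦ ?_, fun x hx ↦ ?_⟩
  · exact contDiffAt_const.div (by fun_prop) (by linarith [hx.1])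
  · have hpos : (0 : ℝ) < a + x := by linarith [hx.1]
    rw [iteratedDeriv_one_div_add, abs_div, abs_mul, abs_pow, abs_neg, abs_one, one_pow, one_mul,
      Nat.abs_cast, abs_of_pos (by positivity)]
    gcongr
    linarith [hx.1]

/-- The coefficient of the leading correction to `b log b` in `irwinSum b d (k + 1)`. -/
noncomputable def irwinCorrection (b d : ℕ) (ν : Measure ℝ) : ℝ :=
  -(∫ x, deriv (fun x : ℝ ↦ 1 / (d + x)) x ∂ν + decayRate b *
    ∑ a ∈ (Finset.Ico 1 b).erase d, ∫ x, deriv (fun x : ℝ ↦ 1 / (a + x)) x ∂ν)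

theorem irwinSum_succ_eq_add_irwinDefect (hd : d ∈ Finset.Ico 1 b) :
    irwinSum b d (k + 1) = b * Real.log b
      + b * (d + 1 / 2) * decayRate b ^ (k + 1) * irwinCorrection b d ν
      + (irwinDefect b d k ν (fun x ↦ 1 / (d + x))
        + ∑ a ∈ (Finset.Ico 1 b).erase d, irwinDefect b d (k + 1) ν (fun x ↦ 1 / (a + x))) := by
  have hterm (j a : ℕ) : ∫ x, 1 / (a + x) ∂irwinMeasure b d j
      = b * (∫ x in (0 : ℝ)..1, 1 / (a + x))
        - b * (d + 1 / 2) * decayRate b ^ (j + 1) * ∫ x, deriv (fun x : ℝ ↦ 1 / (a + x)) x ∂ν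
        + irwinDefect b d j ν (fun x ↦ 1 / (a + x)) := by
    rw [irwinDefect]
    ring
  obtain ⟨hd1, hdb⟩ := Finset.mem_Ico.1 hd
  rw [irwinSum_succ_eq (by lia) hdb, ← sum_integral_one_div_add (by lia), irwinCorrection,
    ← Finset.add_sum_erase _ _ hd, ← Finset.add_sum_erase _ _ hd, if_pos rfl, hterm,
    Finset.sum_congr rfl fun a ha ↦ by rw [if_neg (Finset.ne_of_mem_erase ha), hterm]]
  simp only [Finset.sum_add_distrib, Finset.sum_sub_distrib, ← Finset.mul_sum]
  ring

theorem abs_irwinSum_succ_sub_le (hd : d ∈ Finset.Ico 1 b)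
    (hν : IsSelfSimilar b (tiltedWeight b d) ν) :
    |irwinSum b d (k + 1) - (b * Real.log b
      + b * (d + 1 / 2) * decayRate b ^ (k + 1) * irwinCorrection b d ν)|
      ≤ 24 * (d + 1) ^ 2 / b ^ 2 * (2 / b ^ 3) ^ k := by
  obtain ⟨hd1, hdb⟩ := Finset.mem_Ico.1 hd
  have hb : (2 : ℝ) ≤ b := by exact_mod_cast (by lia : 2 ≤ b)
  have hdefect {a : ℕ} (ha : a ∈ Finset.Ico 1 b) (j : ℕ) :
      |irwinDefect b d j ν (fun x ↦ 1 / (a + x))|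
        ≤ 4 * (d + 1) ^ 2 / b ^ 2 * (2 / b ^ 3) ^ j * 2 := by
    have ha1 : (1 : ℝ) ≤ a := by exact_mod_cast (Finset.mem_Ico.1 ha).1
    refine (abs_irwinDefect_le hdb (by lia) hν
      (hasDerivBound_one_div_add (Finset.mem_Ico.1 ha).1 2)).trans ?_
    gcongr
    rw [Nat.factorial_two, Nat.cast_two]
    exact div_le_self zero_le_two (one_le_pow₀ ha1)
  have hcard : ((Finset.Ico 1 b).erase d).card ≤ b :=
    (Finset.card_erase_le).trans (by simp)
  set C : ℝ := 4 * (d + 1) ^ 2 / b ^ 2 * (2 / b ^ 3) ^ k with hC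
  have hsum : |∑ a ∈ (Finset.Ico 1 b).erase d, irwinDefect b d (k + 1) ν (fun x ↦ 1 / (a + x))|
      ≤ 4 * C :=
    calc |∑ a ∈ (Finset.Ico 1 b).erase d, irwinDefect b d (k + 1) ν (fun x ↦ 1 / (a + x))|
          ≤ b * (4 * (d + 1) ^ 2 / b ^ 2 * (2 / b ^ 3) ^ (k + 1) * 2) := by
          refine (Finset.abs_sum_le_sum_abs _ _).trans ((Finset.sum_le_card_nsmul _ _ _
            fun a ha ↦ hdefect (Finset.mem_of_mem_erase ha) (k + 1)).trans ?_)
          rw [nsmul_eq_mul]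
          gcongr
      _ = 4 * C / b ^ 2 := by
          have hb0 : (b : ℝ) ≠ 0 := (by linarith : (0 : ℝ) < b).ne'
          rw [hC, pow_succ _ k]
          field_simp
          ring
      _ ≤ 4 * C := div_le_self (by positivity) (one_le_pow₀ (by linarith))
  rw [irwinSum_succ_eq_add_irwinDefect (ν := ν) hd, add_sub_cancel_left]
  refine (abs_add_le _ _).trans ((add_le_add (hdefect hd k) hsum).trans_eq ?_)
  rw [← hC]
  ring

end Reciprocal

section EulerMaclaurin

variable {b : ℕ} {f : ℝ → ℝ} {M x : ℝ}

theorem abs_sub_quadratic_le (hf : HasDerivBound 3 f M) (hx : x ∈ Icc (0 : ℝ) 1) :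
    |f x - (f 0 + deriv f 0 * x + deriv (deriv f) 0 / 2 * x ^ 2)| ≤ M / 6 := by
  have htaylor := hf.abs_sub_taylor_le (s := 0) (by simp) hx
  simp only [Finset.sum_range_succ, Finset.sum_range_zero, iteratedDeriv_succ', iteratedDeriv_zero,
    sub_zero, Nat.factorial, Nat.cast_one, zero_add, pow_zero, pow_one, abs_of_nonneg hx.1]
    at htaylor
  norm_num at htaylor
  calc |f x - (f 0 + deriv f 0 * x + deriv (deriv f) 0 / 2 * x ^ 2)| ≤ M * x ^ 3 / 6 := by
        convert htaylor using 3; ring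
    _ ≤ M / 6 := by
        gcongr; exact mul_le_of_le_one_right hf.nonneg (pow_le_one₀ hx.1 hx.2)

theorem abs_integral_sub_quadratic_le (hf : HasDerivBound 3 f M) :
    |(∫ y in (0 : ℝ)..1, f y) - (f 0 + deriv f 0 / 2 + deriv (deriv f) 0 / 6)| ≤ M / 6 := by
  set q : ℝ → ℝ := fun y ↦ f 0 + deriv f 0 * y + deriv (deriv f) 0 / 2 * y ^ 2 with hq
  have hqint : ∫ y in (0 : ℝ)..1, q y = f 0 + deriv f 0 / 2 + deriv (deriv f) 0 / 6 := by
    simp only [hq]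
    rw [intervalIntegral.integral_add (Continuous.intervalIntegrable (by fun_prop) _ _)
        (Continuous.intervalIntegrable (by fun_prop) _ _),
      intervalIntegral.integral_add (Continuous.intervalIntegrable (by fun_prop) _ _)
        (Continuous.intervalIntegrable (by fun_prop) _ _),
      intervalIntegral.integral_const_mul _ fun y ↦ y, intervalIntegral.integral_const_mul]
    simp
    ring
  rw [← hqint, ← intervalIntegral.integral_sub
    (hf.continuousOn.mono (by simp)).intervalIntegrable
    (Continuous.intervalIntegrable (by fun_prop) _ _)]
  exact abs_intervalIntegral_zero_one_le fun y hy ↦ abs_sub_quadratic_le hf hy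

/-- The Euler–Maclaurin approximation of `f` in terms of its mean over `[0, 1]`, up to the second
Bernoulli polynomial. -/
noncomputable def eulerMaclaurin (f : ℝ → ℝ) (x : ℝ) : ℝ :=
  (∫ y in (0 : ℝ)..1, f y) + (x - 1 / 2) * (f 1 - f 0)
    + (x ^ 2 - x + 1 / 6) / 2 * (deriv f 1 - deriv f 0)

theorem abs_sub_eulerMaclaurin_le (hf : HasDerivBound 3 f M) (hx : x ∈ Icc (0 : ℝ) 1) :
    |f x - eulerMaclaurin f x| ≤ M := by
  have hM := hf.nonneg
  have hderiv : |deriv f 1 - deriv f 0 - deriv (deriv f) 0| ≤ M / 2 := by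
    have htaylor := hf.deriv.abs_sub_taylor_le (s := 0) (t := 1) (by simp) (by simp)
    simpa [Finset.sum_range_succ, iteratedDeriv_succ', Nat.factorial, sub_sub] using htaylor
  have hB1 : |x - 1 / 2| ≤ 1 / 2 := abs_le.2 ⟨by linarith [hx.1], by linarith [hx.2]⟩
  have hB2 : |(x ^ 2 - x + 1 / 6) / 2| ≤ 1 / 12 :=
    abs_le.2 ⟨by nlinarith [sq_nonneg (x - 1 / 2)], by nlinarith [hx.1, hx.2]⟩
  -- The remainder vanishes on quadratic polynomials.
  set q : ℝ → ℝ := fun y ↦ f 0 + deriv f 0 * y + deriv (deriv f) 0 / 2 * y ^ 2 with hq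
  have hdecomp : f x - eulerMaclaurin f x
      = (f x - q x) - ((∫ y in (0 : ℝ)..1, f y) - (f 0 + deriv f 0 / 2 + deriv (deriv f) 0 / 6))
        - (x - 1 / 2) * (f 1 - q 1)
        - (x ^ 2 - x + 1 / 6) / 2 * (deriv f 1 - deriv f 0 - deriv (deriv f) 0) := by
    rw [eulerMaclaurin, hq]
    ring
  have hq1 : |(x - 1 / 2) * (f 1 - q 1)| ≤ 1 / 2 * (M / 6) := by
    rw [abs_mul]
    exact mul_le_mul hB1 (abs_sub_quadratic_le hf (by simp)) (abs_nonneg _) (by norm_num)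
  have hq2 : |(x ^ 2 - x + 1 / 6) / 2 * (deriv f 1 - deriv f 0 - deriv (deriv f) 0)|
      ≤ 1 / 12 * (M / 2) := by
    rw [abs_mul]
    exact mul_le_mul hB2 hderiv (abs_nonneg _) (by norm_num)
  rw [hdecomp]
  calc _ ≤ M / 6 + M / 6 + 1 / 2 * (M / 6) + 1 / 12 * (M / 2) :=
        (abs_sub _ _).trans (add_le_add ((abs_sub _ _).trans (add_le_add ((abs_sub _ _).trans
          (add_le_add (abs_sub_quadratic_le hf hx) (abs_integral_sub_quadratic_le hf))) hq1)) hq2)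
    _ ≤ M := by linarith

theorem sum_eulerMaclaurin_comp_digitMap (hb : 0 < b) (hf : ContinuousOn f (Icc 0 1)) :
    ∑ a ∈ Finset.range b, eulerMaclaurin (fun y ↦ f (digitMap b a y)) x
      = b * (∫ y in (0 : ℝ)..1, f y) + (x - 1 / 2) * (f 1 - f 0)
        + (x ^ 2 - x + 1 / 6) / 2 * ((b : ℝ)⁻¹ * (deriv f 1 - deriv f 0)) := by
  have hb' : (b : ℝ) ≠ 0 := by positivity
  have htelescope (g : ℝ → ℝ) :
      ∑ a ∈ Finset.range b, (g (digitMap b a 1) - g (digitMap b a 0)) = g 1 - g 0 := by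
    have := Finset.sum_range_sub (fun a : ℕ ↦ g (a / b)) b
    simpa [digitMap, hb'] using this
  simp only [eulerMaclaurin, Finset.sum_add_distrib, ← Finset.mul_sum, deriv_comp_digitMap,
    ← mul_sub, htelescope]
  rw [integral_eq_sum_digitMap hb hf, mul_inv_cancel_left₀ hb']

theorem abs_sum_comp_digitMap_sub_le (hb : 0 < b) (hf : HasDerivBound 3 f M)
    (hx : x ∈ Icc (0 : ℝ) 1) :
    |∑ a ∈ Finset.range b, f (digitMap b a x)
      - (b * (∫ y in (0 : ℝ)..1, f y) + (x - 1 / 2) * (f 1 - f 0)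
        + (x ^ 2 - x + 1 / 6) / 2 * ((b : ℝ)⁻¹ * (deriv f 1 - deriv f 0)))| ≤ M / b ^ 2 := by
  rw [← sum_eulerMaclaurin_comp_digitMap hb hf.continuousOn, ← Finset.sum_sub_distrib]
  calc _ ≤ ∑ _a ∈ Finset.range b, (b : ℝ)⁻¹ ^ 3 * M :=
        (Finset.abs_sum_le_sum_abs _ _).trans (Finset.sum_le_sum fun a ha ↦
          abs_sub_eulerMaclaurin_le (hf.comp_digitMap (Finset.mem_range.1 ha)) hx)
    _ = M / b ^ 2 := by
        rw [Finset.sum_const, Finset.card_range, nsmul_eq_mul]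
        field_simp

end EulerMaclaurin

section TiltedLaw

variable {b d : ℕ} {ν : Measure ℝ} {f : ℝ → ℝ} {M x : ℝ}

theorem integral_eq_integral_tilted (hd : d < b) (hν : IsSelfSimilar b (tiltedWeight b d) ν)
    (hf : ContinuousOn f (Icc 0 1)) :
    ∫ x, f x ∂ν = ∫ x, ((b : ℝ) ^ 2)⁻¹ * ∑ a ∈ Finset.range b, f (digitMap b a x)
      + (1 - (b : ℝ)⁻¹) * f (digitMap b d x) ∂ν := by
  have hint {a : ℕ} (ha : a ∈ Finset.range b) : Integrable (fun x ↦ f (digitMap b a x)) ν :=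
    hν.integrable (continuousOn_comp_digitMap hf (Finset.mem_range.1 ha))
  rw [hν.integral_eq_sum (tiltedWeight_nonneg (by lia)) hf,
    integral_add ((integrable_finsetSum _ fun a ha ↦ hint ha).const_mul _)
      ((hint (Finset.mem_range.2 hd)).const_mul _), integral_const_mul, integral_const_mul,
    integral_finsetSum _ fun a ha ↦ hint ha]
  simp only [tiltedWeight, add_mul, Finset.sum_add_distrib, ← Finset.mul_sum, ite_mul, zero_mul,
    Finset.sum_ite_eq', Finset.mem_range, hd, if_true]

theorem integral_cubic (hν : IsSelfSimilar b (tiltedWeight b d) ν) (p₀ p₁ p₂ p₃ : ℝ) :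
    ∫ x, p₀ + p₁ * x + p₂ * x ^ 2 + p₃ * x ^ 3 ∂ν
      = p₀ + p₁ * ∫ x, x ∂ν + p₂ * ∫ x, x ^ 2 ∂ν + p₃ * ∫ x, x ^ 3 ∂ν := by
  have := hν.isProbabilityMeasure
  rw [integral_add (hν.integrable (by fun_prop)) (hν.integrable (by fun_prop)),
    integral_add (hν.integrable (by fun_prop)) (hν.integrable (by fun_prop)),
    integral_add (hν.integrable (by fun_prop)) (hν.integrable (by fun_prop)),
    integral_const_mul p₁ fun x ↦ x, integral_const_mul, integral_const_mul]
  simp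

theorem sum_digitMap (hb : 0 < b) (x : ℝ) :
    ∑ a ∈ Finset.range b, digitMap b a x = b / 2 + (x - 1 / 2) := by
  have hb' : (b : ℝ) ≠ 0 := by positivity
  have hsum (n : ℕ) : ∑ a ∈ Finset.range n, ((a : ℝ) + x) = n * (n - 1) / 2 + n * x := by
    induction n with
    | zero => simp
    | succ n ih => rw [Finset.sum_range_succ, ih]; push_cast; ring
  simp only [digitMap, ← Finset.sum_div, hsum]
  field_simp
  ring

theorem sum_digitMap_sq (hb : 0 < b) (x : ℝ) :
    ∑ a ∈ Finset.range b, digitMap b a x ^ 2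
      = b / 3 + (x - 1 / 2) + (x ^ 2 - x + 1 / 6) / b := by
  have hb' : (b : ℝ) ≠ 0 := by positivity
  have hsum (n : ℕ) : ∑ a ∈ Finset.range n, ((a : ℝ) + x) ^ 2
      = n ^ 3 / 3 + n ^ 2 * (x - 1 / 2) + n * (x ^ 2 - x + 1 / 6) := by
    induction n with
    | zero => simp
    | succ n ih => rw [Finset.sum_range_succ, ih]; push_cast; ring
  simp only [digitMap, div_pow, ← Finset.sum_div, hsum]
  field_simp

theorem integral_id_eq (hb : 1 < b) (hd : d < b) (hν : IsSelfSimilar b (tiltedWeight b d) ν) :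
    ∫ x, x ∂ν = (d + 1 / 2) / b := by
  have hb0 : (b : ℝ) ≠ 0 := by positivity
  have hb1 : (b : ℝ) - 1 ≠ 0 := by linarith [(by exact_mod_cast hb : (1 : ℝ) < b)]
  have hrec : ∫ x, x ∂ν = ∫ x, (((b : ℝ) ^ 2)⁻¹ * (b / 2 - 1 / 2) + (1 - (b : ℝ)⁻¹) * (d / b))
      + (((b : ℝ) ^ 2)⁻¹ + (1 - (b : ℝ)⁻¹) / b) * x + 0 * x ^ 2 + 0 * x ^ 3 ∂ν := by
    rw [integral_eq_integral_tilted hd hν (continuousOn_id' _)]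
    congr with x
    rw [sum_digitMap (by lia), digitMap]
    ring
  rw [integral_cubic hν] at hrec
  field_simp at hrec ⊢
  refine mul_left_cancel₀ hb1 ?_
  linear_combination hrec

theorem integral_sq_eq (hb : 0 < b) (hd : d < b) (hν : IsSelfSimilar b (tiltedWeight b d) ν) :
    ∫ x, x ^ 2 ∂ν = (b : ℝ)⁻¹ / 3 + ((b : ℝ) ^ 2)⁻¹ * ((∫ x, x ∂ν) - 1 / 2
      + (b : ℝ)⁻¹ * ((∫ x, x ^ 2 ∂ν) - (∫ x, x ∂ν) + 1 / 6)
      + (1 - (b : ℝ)⁻¹) * (d ^ 2 + 2 * d * (∫ x, x ∂ν) + ∫ x, x ^ 2 ∂ν)) := by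
  have hb0 : (b : ℝ) ≠ 0 := by positivity
  have hrec : ∫ x, x ^ 2 ∂ν = ∫ x,
      ((b : ℝ)⁻¹ / 3 + ((b : ℝ) ^ 2)⁻¹ * (-1 / 2 + (b : ℝ)⁻¹ / 6 + (1 - (b : ℝ)⁻¹) * d ^ 2))
      + ((b : ℝ) ^ 2)⁻¹ * (1 - (b : ℝ)⁻¹ + (1 - (b : ℝ)⁻¹) * (2 * d)) * x
      + ((b : ℝ) ^ 2)⁻¹ * ((b : ℝ)⁻¹ + (1 - (b : ℝ)⁻¹)) * x ^ 2 + 0 * x ^ 3 ∂ν := by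
    rw [integral_eq_integral_tilted hd hν (by fun_prop)]
    congr with x
    rw [sum_digitMap_sq hb, digitMap]
    field_simp
    ring
  rw [integral_cubic hν] at hrec
  linear_combination hrec

theorem integral_pow_mem_Icc {w : ℕ → ℝ} (hν : IsSelfSimilar b w ν) {n : ℕ} (hn : n ≠ 0) :
    ∫ x, x ^ n ∂ν ∈ Icc 0 (∫ x, x ∂ν) := by
  have := hν.isProbabilityMeasure
  refine ⟨integral_nonneg_of_ae ?_, integral_mono_ae (hν.integrable (by fun_prop))
    (hν.integrable (by fun_prop)) ?_⟩ <;> filter_upwards [hν.ae_mem_Icc] with x hx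
  · exact pow_nonneg hx.1 n
  · exact pow_le_of_le_one hx.1 hx.2 hn

theorem abs_integral_sq_sub_le (hb : 1 < b) (hd : d < b)
    (hν : IsSelfSimilar b (tiltedWeight b d) ν) :
    |∫ x, x ^ 2 ∂ν - (b : ℝ)⁻¹ / 3| ≤ 3 * (d + 1) ^ 2 / b ^ 2 := by
  have hb' : (1 : ℝ) < b := by exact_mod_cast hb
  obtain ⟨h20, h21⟩ := integral_pow_mem_Icc hν two_ne_zero
  have hm1 : ∫ x, x ∂ν ≤ 1 := by
    rw [integral_id_eq hb hd hν, div_le_one (by linarith)]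
    linarith [(by exact_mod_cast hd : (d + 1 : ℝ) ≤ b)]
  have hh0 : 0 < (b : ℝ)⁻¹ := by positivity
  have hh1 : (b : ℝ)⁻¹ ≤ 1 := inv_le_one_of_one_le₀ hb'.le
  rw [integral_sq_eq (by lia) hd hν, add_sub_cancel_left, abs_mul,
    abs_of_nonneg (by positivity), mul_comm, ← div_eq_mul_inv]
  gcongr
  generalize (∫ x, x ∂ν) = m₁ at *
  generalize (∫ x, x ^ 2 ∂ν) = m₂ at *
  have hmid : |(b : ℝ)⁻¹ * (m₂ - m₁ + 1 / 6)| ≤ 1 * 1 := by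
    rw [abs_mul, abs_of_pos hh0]
    gcongr
    exact abs_le.2 ⟨by linarith, by linarith⟩
  have hdigit : |(1 - (b : ℝ)⁻¹) * (d ^ 2 + 2 * d * m₁ + m₂)|
      ≤ 1 * ((d : ℝ) ^ 2 + 2 * d * 1 + 1) := by
    have hm0 : 0 ≤ m₁ := by linarith
    rw [abs_mul, abs_of_nonneg (sub_nonneg.2 hh1), abs_of_nonneg (by positivity)]
    gcongr <;> linarith
  have hd2 : (0 : ℝ) ≤ d ^ 2 + d := by positivity
  rw [abs_le] at hmid hdigit ⊢
  constructor <;> linarith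

/-- The approximation of the integrand in `integral_eq_integral_tilted` that expands the sum over
all digits by Euler–Maclaurin summation and the term of the digit `d` in a Taylor series at `0`. -/
noncomputable def tiltedApprox (b d : ℕ) (f : ℝ → ℝ) (x : ℝ) : ℝ :=
  ((b : ℝ) ^ 2)⁻¹ * (b * (∫ y in (0 : ℝ)..1, f y) + (x - 1 / 2) * (f 1 - f 0)
      + (x ^ 2 - x + 1 / 6) / 2 * ((b : ℝ)⁻¹ * (deriv f 1 - deriv f 0)))
    + (1 - (b : ℝ)⁻¹) * ∑ i ∈ Finset.range 4, iteratedDeriv i f 0 * digitMap b d x ^ i / i !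

theorem abs_sub_tiltedApprox_le (hd : d < b) (hf₃ : HasDerivBound 3 f M)
    (hf₄ : HasDerivBound 4 f M) (hx : x ∈ Icc (0 : ℝ) 1) :
    |((b : ℝ) ^ 2)⁻¹ * ∑ a ∈ Finset.range b, f (digitMap b a x)
      + (1 - (b : ℝ)⁻¹) * f (digitMap b d x) - tiltedApprox b d f x|
      ≤ 2 * (d + 1) ^ 4 * M / b ^ 4 := by
  have hb : (1 : ℝ) ≤ b := by exact_mod_cast (by lia : 1 ≤ b)
  have hM := hf₃.nonneg
  have hS := digitMap_mem_Icc hd hx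
  have hsum := abs_sum_comp_digitMap_sub_le (by lia : 0 < b) hf₃ hx
  have htaylor := hf₄.abs_sub_taylor_le (s := 0) (by simp) hS
  have hSle : digitMap b d x ≤ (d + 1) / b := by
    unfold digitMap
    gcongr
    exact hx.2
  simp only [sub_zero, abs_of_nonneg hS.1] at htaylor
  rw [tiltedApprox, add_sub_add_comm, ← mul_sub, ← mul_sub]
  refine (abs_add_le _ _).trans ?_
  rw [abs_mul, abs_mul, abs_of_nonneg (by positivity),
    abs_of_nonneg (sub_nonneg.2 (inv_le_one_of_one_le₀ hb))]
  calc _ ≤ ((b : ℝ) ^ 2)⁻¹ * (M / b ^ 2) + 1 * (M * ((d + 1) / b) ^ 4 / 1) := by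
        gcongr
        · simp
        · refine htaylor.trans ?_
          gcongr
          · exact hS.1
          · exact_mod_cast Nat.factorial_pos _
    _ = (1 + (d + 1) ^ 4) * M / b ^ 4 := by
        field_simp
    _ ≤ 2 * (d + 1) ^ 4 * M / b ^ 4 := by
        gcongr
        linarith [one_le_pow₀ (M₀ := ℝ) (a := d + 1) (n := 4) (by simp)]

theorem abs_integral_sub_integral_tiltedApprox_le (hd : d < b)
    (hν : IsSelfSimilar b (tiltedWeight b d) ν) (hf₃ : HasDerivBound 3 f M)
    (hf₄ : HasDerivBound 4 f M) :
    |∫ x, f x ∂ν - ∫ x, tiltedApprox b d f x ∂ν| ≤ 2 * (d + 1) ^ 4 * M / b ^ 4 := by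
  have happrox : Continuous (tiltedApprox b d f) := by
    unfold tiltedApprox
    have := continuous_digitMap (b := b) (a := d)
    fun_prop
  have hdigits : ContinuousOn (fun x ↦ ((b : ℝ) ^ 2)⁻¹ * ∑ a ∈ Finset.range b, f (digitMap b a x)
      + (1 - (b : ℝ)⁻¹) * f (digitMap b d x)) (Icc 0 1) :=
    (continuousOn_const.mul (continuousOn_finsetSum _ fun a ha ↦
      continuousOn_comp_digitMap hf₃.continuousOn (Finset.mem_range.1 ha))).add
      (continuousOn_const.mul (continuousOn_comp_digitMap hf₃.continuousOn hd))
  rw [integral_eq_integral_tilted hd hν hf₃.continuousOn, ← integral_sub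
    (hν.integrable hdigits) (hν.integrable happrox.continuousOn)]
  exact hν.abs_integral_le fun x hx ↦ abs_sub_tiltedApprox_le hd hf₃ hf₄ hx

/-- The coefficients of the expansion of `∫ x, f x ∂ν` in powers of `1 / b`, where `ν` is the
self-similar law with weights `tiltedWeight b d`, truncated at order `4`. -/
noncomputable def tiltedCoeff (d : ℕ) (f : ℝ → ℝ) : ℕ → ℝ
  | 0 => f 0
  | 1 => (∫ x in (0 : ℝ)..1, f x) - f 0 + d * deriv f 0
  | 2 => -(f 1 - f 0) / 2 + deriv f 0 / 2 + d ^ 2 / 2 * iteratedDeriv 2 f 0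
  | 3 => (d + 1 / 2) * (f 1 - f 0 - deriv f 0) + (deriv f 1 - deriv f 0) / 12
      + ((d : ℝ) ^ 2 / 2 + d / 2 + 1 / 6) * iteratedDeriv 2 f 0 + d ^ 3 / 6 * iteratedDeriv 3 f 0
  | _ + 4 => 0

theorem integral_tiltedApprox_sub (hb : 1 < b) (hd : d < b)
    (hν : IsSelfSimilar b (tiltedWeight b d) ν) :
    ∫ x, tiltedApprox b d f x ∂ν - ∑ i ∈ Finset.range 4, tiltedCoeff d f i * (b : ℝ)⁻¹ ^ i
      = (b : ℝ)⁻¹ ^ 3 / 2 * ((∫ x, x ^ 2 ∂ν) - ∫ x, x ∂ν) * (deriv f 1 - deriv f 0)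
        + (b : ℝ)⁻¹ ^ 2 / 2 * ((1 - (b : ℝ)⁻¹) * ((∫ x, x ^ 2 ∂ν) - (b : ℝ)⁻¹ / 3)
          - (b : ℝ)⁻¹ ^ 2 * (2 * d * (d + 1 / 2) + 1 / 3)) * iteratedDeriv 2 f 0
        + (b : ℝ)⁻¹ ^ 3 / 6 * ((1 - (b : ℝ)⁻¹) * (3 * d ^ 2 * (∫ x, x ∂ν)
          + 3 * d * (∫ x, x ^ 2 ∂ν) + ∫ x, x ^ 3 ∂ν) - (b : ℝ)⁻¹ * d ^ 3)
          * iteratedDeriv 3 f 0 := by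
  have hb0 : (b : ℝ) ≠ 0 := by positivity
  have hcubic := integral_cubic hν
    (((b : ℝ) ^ 2)⁻¹ * (b * (∫ y in (0 : ℝ)..1, f y) - (f 1 - f 0) / 2
        + (b : ℝ)⁻¹ * (deriv f 1 - deriv f 0) / 12)
      + (1 - (b : ℝ)⁻¹) * (f 0 + deriv f 0 * (d / b) + iteratedDeriv 2 f 0 * (d / b) ^ 2 / 2
        + iteratedDeriv 3 f 0 * (d / b) ^ 3 / 6))
    (((b : ℝ) ^ 2)⁻¹ * (f 1 - f 0 - (b : ℝ)⁻¹ * (deriv f 1 - deriv f 0) / 2)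
      + (1 - (b : ℝ)⁻¹) * (deriv f 0 / b + iteratedDeriv 2 f 0 * d / b ^ 2
        + iteratedDeriv 3 f 0 * d ^ 2 / b ^ 3 / 2))
    (((b : ℝ) ^ 2)⁻¹ * ((b : ℝ)⁻¹ * (deriv f 1 - deriv f 0) / 2)
      + (1 - (b : ℝ)⁻¹) * (iteratedDeriv 2 f 0 / b ^ 2 / 2 + iteratedDeriv 3 f 0 * d / b ^ 3 / 2))
    ((1 - (b : ℝ)⁻¹) * (iteratedDeriv 3 f 0 / b ^ 3 / 6))
  have hint := (integral_congr_ae (f := tiltedApprox b d f) (ae_of_all ν fun x ↦ ?_)).trans hcubic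
  · rw [hint, integral_id_eq hb hd hν]
    simp only [tiltedCoeff, Finset.sum_range_succ, Finset.sum_range_zero]
    field_simp
    ring
  · simp only [tiltedApprox, digitMap, Finset.sum_range_succ, Finset.sum_range_zero, Nat.factorial,
      iteratedDeriv_zero, iteratedDeriv_one]
    field_simp
    push_cast
    ring

theorem integral_id_le (hb : 1 < b) (hd : d < b) (hν : IsSelfSimilar b (tiltedWeight b d) ν) :
    ∫ x, x ∂ν ≤ (d + 1) * (b : ℝ)⁻¹ := by
  rw [integral_id_eq hb hd hν, div_eq_mul_inv]
  gcongr
  norm_num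

theorem abs_one_sub_inv_le_one (hb : 0 < b) : |1 - (b : ℝ)⁻¹| ≤ 1 :=
  abs_le.2 ⟨by linarith [inv_le_one_of_one_le₀ (by exact_mod_cast hb : (1 : ℝ) ≤ b)],
    by linarith [(by positivity : 0 < (b : ℝ)⁻¹)]⟩

theorem abs_quadratic_moment_sub_le (hb : 1 < b) (hd : d < b)
    (hν : IsSelfSimilar b (tiltedWeight b d) ν) :
    |(1 - (b : ℝ)⁻¹) * ((∫ x, x ^ 2 ∂ν) - (b : ℝ)⁻¹ / 3)
      - (b : ℝ)⁻¹ ^ 2 * (2 * d * (d + 1 / 2) + 1 / 3)| ≤ 5 * (d + 1) ^ 2 * (b : ℝ)⁻¹ ^ 2 := by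
  have hm₂ := abs_integral_sq_sub_le hb hd hν
  rw [div_eq_mul_inv _ ((b : ℝ) ^ 2), ← inv_pow] at hm₂
  have hd2 : |2 * (d : ℝ) * (d + 1 / 2) + 1 / 3| ≤ 2 * (d + 1) ^ 2 := by
    rw [abs_of_nonneg (by positivity)]
    nlinarith
  refine (abs_sub _ _).trans ?_
  rw [abs_mul, abs_mul, abs_of_nonneg (by positivity : 0 ≤ (b : ℝ)⁻¹ ^ 2)]
  calc _ ≤ 1 * (3 * (d + 1) ^ 2 * (b : ℝ)⁻¹ ^ 2) + (b : ℝ)⁻¹ ^ 2 * (2 * (d + 1) ^ 2) := by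
        gcongr
        exact abs_one_sub_inv_le_one (by lia)
    _ = 5 * (d + 1) ^ 2 * (b : ℝ)⁻¹ ^ 2 := by ring

theorem abs_cubic_moment_sub_le (hb : 1 < b) (hd : d < b)
    (hν : IsSelfSimilar b (tiltedWeight b d) ν) :
    |(1 - (b : ℝ)⁻¹) * (3 * d ^ 2 * (∫ x, x ∂ν) + 3 * d * (∫ x, x ^ 2 ∂ν) + ∫ x, x ^ 3 ∂ν)
      - (b : ℝ)⁻¹ * d ^ 3| ≤ 4 * (d + 1) ^ 3 * (b : ℝ)⁻¹ := by
  obtain ⟨hm₂0, hm₂1⟩ := integral_pow_mem_Icc hν two_ne_zero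
  obtain ⟨hm₃0, hm₃1⟩ := integral_pow_mem_Icc hν three_ne_zero
  have hm₁0 := hm₂0.trans hm₂1
  have hmoments : 3 * (d : ℝ) ^ 2 * (∫ x, x ∂ν) + 3 * d * (∫ x, x ^ 2 ∂ν) + ∫ x, x ^ 3 ∂ν
      ≤ 3 * (d + 1) ^ 2 * ((d + 1) * (b : ℝ)⁻¹) :=
    calc _ ≤ 3 * (d : ℝ) ^ 2 * (∫ x, x ∂ν) + 3 * d * (∫ x, x ∂ν) + ∫ x, x ∂ν := by gcongr
      _ ≤ 3 * (d + 1) ^ 2 * ∫ x, x ∂ν := by nlinarith [mul_nonneg d.cast_nonneg hm₁0]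
      _ ≤ 3 * (d + 1) ^ 2 * ((d + 1) * (b : ℝ)⁻¹) := by gcongr; exact integral_id_le hb hd hν
  refine (abs_sub _ _).trans ?_
  rw [abs_mul, abs_of_nonneg (by positivity : 0 ≤ (b : ℝ)⁻¹ * d ^ 3),
    abs_of_nonneg (by positivity : 0 ≤ 3 * (d : ℝ) ^ 2 * (∫ x, x ∂ν) + 3 * d * (∫ x, x ^ 2 ∂ν)
      + ∫ x, x ^ 3 ∂ν)]
  calc _ ≤ 1 * (3 * (d + 1) ^ 2 * ((d + 1) * (b : ℝ)⁻¹)) + (b : ℝ)⁻¹ * (d + 1) ^ 3 := by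
        gcongr
        · exact abs_one_sub_inv_le_one (by lia)
        · simp
    _ = 4 * (d + 1) ^ 3 * (b : ℝ)⁻¹ := by ring

theorem abs_integral_tiltedApprox_sub_le (hb : 1 < b) (hd : d < b)
    (hν : IsSelfSimilar b (tiltedWeight b d) ν) (hf : ∀ i ≤ 3, HasDerivBound i f M) :
    |∫ x, tiltedApprox b d f x ∂ν - ∑ i ∈ Finset.range 4, tiltedCoeff d f i * (b : ℝ)⁻¹ ^ i|
      ≤ 5 * (d + 1) ^ 4 * M / b ^ 4 := by
  have hM := (hf 0 (by simp)).nonneg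
  have hbound {i : ℕ} (hi : i ≤ 3) {x : ℝ} (hx : x ∈ Icc (0 : ℝ) 1) :=
    (hf i hi).abs_iteratedDeriv_le x hx
  obtain ⟨hm₂0, hm₂1⟩ := integral_pow_mem_Icc hν two_ne_zero
  have hm₂ : |(∫ x, x ^ 2 ∂ν) - ∫ x, x ∂ν| ≤ (d + 1) * (b : ℝ)⁻¹ := by
    have hm₁ := integral_id_le hb hd hν
    exact abs_le.2 ⟨by linarith, by linarith⟩
  have hderiv : |deriv f 1 - deriv f 0| ≤ M + M := by
    simpa using (abs_sub _ _).trans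
      (add_le_add (hbound (i := 1) (x := 1) (by simp) (by simp))
        (hbound (i := 1) (x := 0) (by simp) (by simp)))
  rw [integral_tiltedApprox_sub hb hd hν]
  refine (abs_add_three _ _ _).trans ?_
  rw [abs_mul, abs_mul, abs_mul _ (iteratedDeriv 2 f 0), abs_mul, abs_mul _ (iteratedDeriv 3 f 0),
    abs_mul, abs_of_nonneg (by positivity : 0 ≤ (b : ℝ)⁻¹ ^ 3 / 2),
    abs_of_nonneg (by positivity : 0 ≤ (b : ℝ)⁻¹ ^ 2 / 2),
    abs_of_nonneg (by positivity : 0 ≤ (b : ℝ)⁻¹ ^ 3 / 6)]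
  have hpow {i : ℕ} (hi : i ≤ 4) :
      (d + 1 : ℝ) ^ i * (M / b ^ 4) ≤ (d + 1 : ℝ) ^ 4 * (M / b ^ 4) := by
    gcongr
    simp
  calc _ ≤ (b : ℝ)⁻¹ ^ 3 / 2 * ((d + 1) * (b : ℝ)⁻¹) * (M + M)
        + (b : ℝ)⁻¹ ^ 2 / 2 * (5 * (d + 1) ^ 2 * (b : ℝ)⁻¹ ^ 2) * M
        + (b : ℝ)⁻¹ ^ 3 / 6 * (4 * (d + 1) ^ 3 * (b : ℝ)⁻¹) * M := by
        gcongr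
        · exact abs_quadratic_moment_sub_le hb hd hν
        · exact hbound (by simp) (by simp)
        · exact abs_cubic_moment_sub_le hb hd hν
        · exact hbound le_rfl (by simp)
    _ = (d + 1) ^ 1 * (M / b ^ 4) + 5 / 2 * ((d + 1) ^ 2 * (M / b ^ 4))
        + 2 / 3 * ((d + 1) ^ 3 * (M / b ^ 4)) := by ring
    _ ≤ (d + 1) ^ 4 * (M / b ^ 4) + 5 / 2 * ((d + 1) ^ 4 * (M / b ^ 4))
        + 2 / 3 * ((d + 1) ^ 4 * (M / b ^ 4)) := by
        gcongr ?_ + _ * ?_ + _ * ?_ <;> exact hpow (by simp)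
    _ ≤ 5 * (d + 1) ^ 4 * M / b ^ 4 := by
        rw [mul_assoc, mul_div_assoc, mul_div_assoc]
        linarith [(by positivity : 0 ≤ (d + 1 : ℝ) ^ 4 * (M / b ^ 4))]

theorem abs_integral_sub_tiltedCoeff_le (hb : 1 < b) (hd : d < b)
    (hν : IsSelfSimilar b (tiltedWeight b d) ν) (hf : ∀ i ≤ 4, HasDerivBound i f M) :
    |∫ x, f x ∂ν - ∑ i ∈ Finset.range 4, tiltedCoeff d f i * (b : ℝ)⁻¹ ^ i|
      ≤ 7 * (d + 1) ^ 4 * M / b ^ 4 := by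
  refine (abs_sub_le _ (∫ x, tiltedApprox b d f x ∂ν) _).trans ((add_le_add
    (abs_integral_sub_integral_tiltedApprox_le hd hν (hf 3 (by simp)) (hf 4 le_rfl))
    (abs_integral_tiltedApprox_sub_le hb hd hν fun i hi ↦ hf i (by lia))).trans_eq ?_)
  ring

theorem abs_tiltedCoeff_le (hf : ∀ i ≤ 3, HasDerivBound i f M) (i : ℕ) :
    |tiltedCoeff d f i| ≤ 4 * (d + 1) ^ 3 * M := by
  have hM := (hf 0 (by simp)).nonneg
  have hbound {i : ℕ} (hi : i ≤ 3) {x : ℝ} (hx : x ∈ Icc (0 : ℝ) 1) :=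
    (hf i hi).abs_iteratedDeriv_le x hx
  have hint : |∫ x in (0 : ℝ)..1, f x| ≤ M :=
    abs_intervalIntegral_zero_one_le fun x hx ↦ by simpa using hbound (i := 0) (by simp) hx
  have hf0 : |f 0| ≤ M := by simpa using hbound (i := 0) (x := 0) (by simp) (by simp)
  have hf1 : |f 1| ≤ M := by simpa using hbound (i := 0) (x := 1) (by simp) (by simp)
  have hf'0 : |deriv f 0| ≤ M := by simpa using hbound (i := 1) (x := 0) (by simp) (by simp)
  have hf'1 : |deriv f 1| ≤ M := by simpa using hbound (i := 1) (x := 1) (by simp) (by simp)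
  have hmul {c y : ℝ} (hc : 0 ≤ c) (hy : |y| ≤ M) : |c * y| ≤ c * M := by
    rw [abs_mul, abs_of_nonneg hc]
    gcongr
  have hdM : 0 ≤ d * M := by positivity
  have hd2M : 0 ≤ d ^ 2 * M := by positivity
  have hd3M : 0 ≤ d ^ 3 * M := by positivity
  match i with
  | 0 =>
    simp only [tiltedCoeff, abs_le] at *
    constructor <;> linarith
  | 1 =>
    have h1 := hmul (c := d) (by positivity) hf'0
    simp only [tiltedCoeff, abs_le] at *
    constructor <;> linarith
  | 2 =>
    have h2 := hmul (c := d ^ 2 / 2) (by positivity)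
      (hbound (i := 2) (x := 0) (by simp) (by simp))
    simp only [tiltedCoeff, abs_le] at *
    constructor <;> linarith
  | 3 =>
    have h1 := hmul (c := d) (by positivity) hf1
    have h2 := hmul (c := d ^ 2 / 2 + d / 2 + 1 / 6) (by positivity)
      (hbound (i := 2) (x := 0) (by simp) (by simp))
    have h3 := hmul (c := d ^ 3 / 6) (by positivity)
      (hbound (i := 3) (x := 0) (by simp) (by simp))
    have h4 := hmul (c := d) (by positivity) hf0
    have h5 := hmul (c := d) (by positivity) hf'0
    simp only [tiltedCoeff, abs_le] at *
    constructor <;> linarith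
  | _ + 4 =>
    rw [tiltedCoeff, abs_zero]
    positivity

theorem abs_integral_sub_linear_le (hb : 1 < b) (hd : d < b)
    (hν : IsSelfSimilar b (tiltedWeight b d) ν) (hf : ∀ i ≤ 4, HasDerivBound i f M) :
    |∫ x, f x ∂ν - (tiltedCoeff d f 0 + tiltedCoeff d f 1 / b)| ≤ 15 * (d + 1) ^ 4 * M / b ^ 2 := by
  have hM := (hf 0 (by simp)).nonneg
  have hb1 : (1 : ℝ) ≤ b := by exact_mod_cast hb.le
  have hcoeff := abs_tiltedCoeff_le (d := d) fun i hi ↦ hf i (by lia)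
  have hdecomp : ∫ x, f x ∂ν - (tiltedCoeff d f 0 + tiltedCoeff d f 1 / b)
      = (∫ x, f x ∂ν - ∑ i ∈ Finset.range 4, tiltedCoeff d f i * (b : ℝ)⁻¹ ^ i)
        + tiltedCoeff d f 2 / b ^ 2 + tiltedCoeff d f 3 / b ^ 3 := by
    simp only [Finset.sum_range_succ, Finset.sum_range_zero]
    field_simp
    ring
  rw [hdecomp]
  refine (abs_add_three _ _ _).trans ?_
  rw [abs_div, abs_div, abs_of_nonneg (by positivity : (0 : ℝ) ≤ b ^ 2),
    abs_of_nonneg (by positivity : (0 : ℝ) ≤ b ^ 3)]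
  calc _ ≤ 7 * (d + 1) ^ 4 * M / b ^ 2 + 4 * (d + 1) ^ 4 * M / b ^ 2
        + 4 * (d + 1) ^ 4 * M / b ^ 2 := by
        gcongr
        · refine (abs_integral_sub_tiltedCoeff_le hb hd hν hf).trans ?_
          gcongr
          simp
        · refine (hcoeff 2).trans ?_
          gcongr <;> simp
        · refine (hcoeff 3).trans ?_
          gcongr <;> simp
        · simp
    _ = 15 * (d + 1) ^ 4 * M / b ^ 2 := by ring

end TiltedLaw

section Expansion

open PowerSeries

/-- `f b` agrees with the power series `p` at `1 / b` up to an error `O(1 / b ^ n)`. -/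
def HasExpansion (n : ℕ) (f : ℕ → ℝ) (p : PowerSeries ℝ) : Prop :=
  (fun b : ℕ ↦ f b - ∑ i ∈ Finset.range n, coeff i p * (b : ℝ)⁻¹ ^ i)
    =O[atTop] fun b : ℕ ↦ (b : ℝ)⁻¹ ^ n

variable {n : ℕ} {f g : ℕ → ℝ} {p q : PowerSeries ℝ} {K : ℝ}

theorem isBigO_inv_pow_of_abs_le (h : ∀ᶠ b : ℕ in atTop, |f b| ≤ K / b ^ n) :
    f =O[atTop] fun b : ℕ ↦ (b : ℝ)⁻¹ ^ n := by
  refine IsBigO.of_bound K (h.mono fun b hb ↦ ?_)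
  rwa [Real.norm_eq_abs, Real.norm_of_nonneg (by positivity), inv_pow, ← div_eq_mul_inv]

theorem isBigO_one_comp_inv {F : ℝ → ℝ} (hF : ContinuousAt F 0) :
    (fun b : ℕ ↦ F (b : ℝ)⁻¹) =O[atTop] fun _ ↦ (1 : ℝ) :=
  (hF.tendsto.comp tendsto_inv_atTop_nhds_zero_nat).isBigO_one ℝ

theorem isBigO_inv_pow_mul_comp_inv {F : ℝ → ℝ} (hF : ContinuousAt F 0) (n : ℕ) :
    (fun b : ℕ ↦ (b : ℝ)⁻¹ ^ n * F (b : ℝ)⁻¹) =O[atTop] fun b : ℕ ↦ (b : ℝ)⁻¹ ^ n := by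
  simpa using (isBigO_refl (fun b : ℕ ↦ (b : ℝ)⁻¹ ^ n) atTop).mul (isBigO_one_comp_inv hF)

theorem eval_trunc_eq_sum_range (p : PowerSeries ℝ) (n : ℕ) (h : ℝ) :
    (trunc n p).eval h = ∑ i ∈ Finset.range n, coeff i p * h ^ i := by
  simpa [Polynomial.eval₂_eq_eval_map] using eval₂_trunc_eq_sum_range h (RingHom.id ℝ) n p

theorem hasExpansion_iff : HasExpansion n f p ↔
    (fun b : ℕ ↦ f b - (trunc n p).eval (b : ℝ)⁻¹) =O[atTop] fun b : ℕ ↦ (b : ℝ)⁻¹ ^ n := by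
  simp only [HasExpansion, eval_trunc_eq_sum_range]

theorem X_pow_dvd_trunc_mul_trunc_sub (p q : PowerSeries ℝ) (n : ℕ) :
    Polynomial.X ^ n ∣ trunc n p * trunc n q - trunc n (p * q) := by
  refine Polynomial.X_pow_dvd_iff.2 fun i hi ↦ ?_
  rw [Polynomial.coeff_sub, coeff_trunc, if_pos hi, coeff_mul_eq_coeff_trunc_mul_trunc p q hi,
    ← Polynomial.coe_mul, Polynomial.coeff_coe, sub_self]

namespace HasExpansion

theorem congr_coeff (hf : HasExpansion n f p) (h : ∀ i < n, coeff i p = coeff i q) :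
    HasExpansion n f q :=
  hf.congr_left fun b ↦ by
    rw [Finset.sum_congr rfl fun i hi ↦ by rw [h i (Finset.mem_range.1 hi)]]

theorem congr' (hf : HasExpansion n f p) (h : f =ᶠ[atTop] g) : HasExpansion n g p :=
  IsBigO.congr' hf (h.mono fun b hb ↦ by simp only [hb]) EventuallyEq.rfl

theorem add (hf : HasExpansion n f p) (hg : HasExpansion n g q) :
    HasExpansion n (fun b ↦ f b + g b) (p + q) :=
  (IsBigO.add hf hg).congr_left fun b ↦ by
    simp only [map_add, add_mul, Finset.sum_add_distrib]
    ring

theorem mul (hf : HasExpansion n f p) (hg : HasExpansion n g q) :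
    HasExpansion n (fun b ↦ f b * g b) (p * q) := by
  obtain ⟨r, hr⟩ := X_pow_dvd_trunc_mul_trunc_sub p q n
  have hg_bdd : g =O[atTop] fun _ ↦ (1 : ℝ) := by
    simpa using ((hasExpansion_iff.1 hg).trans
      (isBigO_one_comp_inv (F := (· ^ n)) (by fun_prop))).add
      (isBigO_one_comp_inv (trunc n q).continuousAt)
  have hmain := (((hasExpansion_iff.1 hf).mul hg_bdd).congr_right fun b ↦ mul_one _).add
    (((isBigO_one_comp_inv (trunc n p).continuousAt).mul
      (hasExpansion_iff.1 hg)).congr_right fun b ↦ one_mul _)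
  refine hasExpansion_iff.2 ((hmain.add
    (isBigO_inv_pow_mul_comp_inv r.continuousAt n)).congr_left fun b ↦ ?_)
  have hreval := congrArg (Polynomial.eval (b : ℝ)⁻¹) hr
  simp only [Polynomial.eval_sub, Polynomial.eval_mul, Polynomial.eval_pow, Polynomial.eval_X]
    at hreval
  linear_combination -hreval

theorem inv_pow_mul (hf : HasExpansion n f p) (m : ℕ) :
    HasExpansion (m + n) (fun b ↦ (b : ℝ)⁻¹ ^ m * f b) (X ^ m * p) := by
  refine ((isBigO_refl (fun b : ℕ ↦ (b : ℝ)⁻¹ ^ m) atTop).mul hf).congr (fun b ↦ ?_) fun b ↦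
    (pow_add _ _ _).symm
  have hlow : ∑ i ∈ Finset.range m, coeff i (X ^ m * p) * (b : ℝ)⁻¹ ^ i = 0 :=
    Finset.sum_eq_zero fun i hi ↦ by
      rw [coeff_X_pow_mul', if_neg (Finset.mem_range.1 hi).not_ge, zero_mul]
  rw [mul_sub, Finset.sum_range_add, hlow, zero_add, Finset.mul_sum]
  congr 1
  refine Finset.sum_congr rfl fun i _ ↦ ?_
  rw [add_comm m i, coeff_X_pow_mul]
  ring

end HasExpansion

theorem hasExpansion_const (c : ℝ) (n : ℕ) : HasExpansion n (fun _ ↦ c) (PowerSeries.C c) := by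
  rcases n with _ | n
  · simpa [HasExpansion] using isBigO_const_const c (one_ne_zero (α := ℝ)) atTop
  · refine (isBigO_zero _ _).congr_left fun b ↦ ?_
    simp [coeff_C]

/-- The Taylor coefficients of `(1 - h + h ^ 2)⁻¹ ^ k` at `h = 0`, truncated at order `4`. -/
noncomputable def decayCoeff (k : ℕ) : ℕ → ℝ
  | 0 => 1
  | 1 => k
  | 2 => k * (k - 1) / 2
  | 3 => k * (k - 1) * (k - 2) / 6 - k
  | _ + 4 => 0

theorem hasExpansion_inv_one_sub_add_sq :
    HasExpansion 4 (fun b ↦ (1 - (b : ℝ)⁻¹ + (b : ℝ)⁻¹ ^ 2)⁻¹) (PowerSeries.mk (decayCoeff 1)) := by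
  have hrem := isBigO_inv_pow_mul_comp_inv (F := fun h ↦ (h - 1) / (1 - h + h ^ 2))
    (ContinuousAt.div (by fun_prop) (by fun_prop) (by norm_num)) 4
  refine hrem.congr_left fun b ↦ ?_
  have hpos : 1 - (b : ℝ)⁻¹ + (b : ℝ)⁻¹ ^ 2 ≠ 0 := by
    linarith [sq_sub_add_one_pos (b : ℝ)⁻¹]
  simp only [Finset.sum_range_succ, Finset.sum_range_zero, coeff_mk, decayCoeff, Nat.cast_one]
  generalize (b : ℝ)⁻¹ = h at *
  field_simp
  ring

theorem hasExpansion_inv_one_sub_add_sq_pow (k : ℕ) :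
    HasExpansion 4 (fun b ↦ (1 - (b : ℝ)⁻¹ + (b : ℝ)⁻¹ ^ 2)⁻¹ ^ k)
      (PowerSeries.mk (decayCoeff k)) := by
  induction k with
  | zero =>
    refine (hasExpansion_const 1 4).congr_coeff fun i hi ↦ ?_
    interval_cases i <;> simp [decayCoeff]
  | succ k ih =>
    simp only [pow_succ _ k]
    refine (ih.mul hasExpansion_inv_one_sub_add_sq).congr_coeff fun i hi ↦ ?_
    interval_cases i <;>
      simp [coeff_mul, Finset.Nat.antidiagonal_succ, decayCoeff] <;> ring

end Expansion

section ZetaTails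

variable {b m s : ℕ} {f g : ℕ → ℝ}

theorem tsum_sub_sum_range_le (hf : Summable f) (hg : Tendsto g atTop (nhds 0))
    (h : ∀ n ≥ m, f n ≤ g n - g (n + 1)) : ∑' n, f n - ∑ n ∈ Finset.range m, f n ≤ g m := by
  have hanti : Antitone fun n ↦ ∑ i ∈ Finset.range (n + m), f i + g (n + m) :=
    antitone_nat_of_succ_le fun n ↦ by
      rw [add_right_comm, Finset.sum_range_succ]
      linarith [h (n + m) (Nat.le_add_left m n)]
  have hlim := (tendsto_add_atTop_iff_nat m).2 (hf.hasSum.tendsto_sum_nat.add hg)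
  simpa [sub_le_iff_le_add, add_comm] using hanti.le_of_tendsto hlim 0

theorem summable_one_div_pow (hs : 2 ≤ s) : Summable fun n : ℕ ↦ 1 / (n : ℝ) ^ s :=
  Real.summable_one_div_nat_pow.2 hs

theorem zetaR_eq_tsum (hs : 2 ≤ s) : zetaR s = ∑' n : ℕ, 1 / (n : ℝ) ^ s := by
  have hs_ne : s ≠ 0 := by lia
  rw [(summable_one_div_pow hs).tsum_eq_zero_add]
  simp [zetaR, hs_ne]

theorem sum_Ico_one_div_pow (hs : 2 ≤ s) :
    ∑ a ∈ Finset.Ico 1 b, 1 / (a : ℝ) ^ s = ∑ a ∈ Finset.range b, 1 / (a : ℝ) ^ s := by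
  have hs_ne : s ≠ 0 := by lia
  rcases b with _ | b
  · simp
  · rw [Finset.range_eq_Ico, Finset.sum_eq_sum_Ico_succ_bot b.succ_pos]
    simp [hs_ne]

theorem sum_Ico_one_div_pow_le_zetaR (hs : 2 ≤ s) :
    ∑ a ∈ Finset.Ico 1 b, 1 / (a : ℝ) ^ s ≤ zetaR s := by
  rw [zetaR_eq_tsum hs]
  exact (summable_one_div_pow hs).sum_le_tsum _ fun _ _ ↦ by positivity

theorem zetaR_sub_sum_Ico_le (hs : 2 ≤ s) (hb : 1 ≤ b) :
    zetaR s - ∑ a ∈ Finset.Ico 1 b, 1 / (a : ℝ) ^ s ≤ 2 / b := by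
  rw [zetaR_eq_tsum hs, sum_Ico_one_div_pow hs]
  refine tsum_sub_sum_range_le (g := fun n ↦ 2 / n) (summable_one_div_pow hs)
    (tendsto_const_div_atTop_nhds_zero_nat 2) fun n hn ↦ ?_
  have hn_one : (1 : ℝ) ≤ n := by exact_mod_cast hb.trans hn
  calc 1 / (n : ℝ) ^ s ≤ 1 / (n : ℝ) ^ 2 := by gcongr
    _ ≤ 2 / (n * (n + 1)) := by
      rw [div_le_div_iff₀ (by positivity) (by positivity)]
      nlinarith
    _ = 2 / (n : ℝ) - 2 / ((n + 1 : ℕ) : ℝ) := by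
      push_cast
      field_simp
      ring

theorem zetaR_two_sub_sum_Ico_mem_Icc (hb : 1 ≤ b) :
    zetaR 2 - ∑ a ∈ Finset.Ico 1 b, 1 / (a : ℝ) ^ 2 ∈ Icc (1 / (b : ℝ)) (1 / b + 1 / b ^ 2) := by
  rw [zetaR_eq_tsum le_rfl, sum_Ico_one_div_pow le_rfl]
  have hsummable := summable_one_div_pow le_rfl
  have hlim := tendsto_one_div_atTop_nhds_zero_nat (𝕜 := ℝ)
  constructor
  · have hlower := tsum_sub_sum_range_le (m := b) hsummable.neg (neg_zero (G := ℝ) ▸ hlim.neg)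
      fun n hn ↦ by
        have hn_pos : (0 : ℝ) < n := by exact_mod_cast hb.trans hn
        rw [neg_sub_neg, ← sub_nonneg]
        have hstep : 1 / ((n + 1 : ℕ) : ℝ) - 1 / n - -(1 / (n : ℝ) ^ 2) =
            1 / (n ^ 2 * (n + 1)) := by
          push_cast
          field_simp
          ring
        rw [hstep]
        positivity
    rw [tsum_neg, Finset.sum_neg_distrib] at hlower
    linarith
  · refine tsum_sub_sum_range_le (g := fun n ↦ 1 / n + 1 / n ^ 2) hsummable ?_ fun n hn ↦ ?_
    · simpa using hlim.add (hlim.pow 2)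
    · have hn_pos : (0 : ℝ) < n := by exact_mod_cast hb.trans hn
      have hstep : 1 / (n : ℝ) + 1 / n ^ 2 - (1 / ((n + 1 : ℕ) : ℝ) + 1 / ((n + 1 : ℕ) : ℝ) ^ 2) -
          1 / n ^ 2 = 1 / (n * (n + 1) ^ 2) := by
        push_cast
        field_simp
        ring
      rw [← sub_nonneg, hstep]
      positivity

theorem sum_Ico_one_div_sub (hb : 1 ≤ b) :
    ∑ a ∈ Finset.Ico 1 b, (1 / ((a : ℝ) + 1) - 1 / a) = (b : ℝ)⁻¹ - 1 := by
  simpa using Finset.sum_Ico_sub (fun a : ℕ ↦ 1 / (a : ℝ)) hb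

open PowerSeries

theorem hasExpansion_sum_Ico_one_div_pow (hs : 2 ≤ s) :
    HasExpansion 1 (fun b ↦ ∑ a ∈ Finset.Ico 1 b, 1 / (a : ℝ) ^ s) (C (zetaR s)) := by
  refine isBigO_inv_pow_of_abs_le (K := 2) ((eventually_ge_atTop 1).mono fun b hb ↦ ?_)
  have hlower := sum_Ico_one_div_pow_le_zetaR (b := b) hs
  have hupper := zetaR_sub_sum_Ico_le hs hb
  simp only [Finset.sum_range_one, coeff_zero_C, pow_zero, pow_one, mul_one]
  rw [abs_sub_comm, abs_of_nonneg (by linarith)]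
  exact hupper

theorem hasExpansion_sum_Ico_one_div_sq :
    HasExpansion 2 (fun b ↦ ∑ a ∈ Finset.Ico 1 b, 1 / (a : ℝ) ^ 2) (C (zetaR 2) - X) := by
  refine isBigO_inv_pow_of_abs_le (K := 1) ((eventually_ge_atTop 1).mono fun b hb ↦ ?_)
  obtain ⟨hlower, hupper⟩ := zetaR_two_sub_sum_Ico_mem_Icc hb
  have hcoeffs : ∑ i ∈ Finset.range 2, coeff i (C (zetaR 2) - X) * (b : ℝ)⁻¹ ^ i =
      zetaR 2 - 1 / b := by
    simp [Finset.sum_range_succ, coeff_C, sub_eq_add_neg]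
  rw [hcoeffs, abs_le]
  constructor <;> linarith

end ZetaTails

section CorrectionExpansion

variable {a b d n : ℕ}

theorem iteratedDeriv_deriv_one_div_add (a : ℝ) (n : ℕ) :
    iteratedDeriv n (deriv fun x : ℝ ↦ 1 / (a + x)) =
      fun x ↦ (-1) ^ (n + 1) * (n + 1)! / (a + x) ^ (n + 2) := by
  rw [← iteratedDeriv_succ', iteratedDeriv_one_div_add]

theorem deriv_one_div_add (a : ℝ) :
    deriv (fun x : ℝ ↦ 1 / (a + x)) = fun x ↦ -1 / (a + x) ^ 2 := by
  simpa using iteratedDeriv_deriv_one_div_add a 0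

theorem hasDerivBound_deriv_one_div_add (ha : 1 ≤ a) (hn : n ≤ 4) :
    HasDerivBound n (deriv fun x : ℝ ↦ 1 / (a + x)) (120 / a ^ 2) := by
  have ha_one : (1 : ℝ) ≤ a := by exact_mod_cast ha
  refine (hasDerivBound_one_div_add ha (n + 1)).deriv.mono ?_
  have hfactorial : ((n + 1)! : ℝ) ≤ 120 := by
    exact_mod_cast Nat.factorial_le (Nat.add_le_add_right hn 1)
  gcongr
  lia

theorem intervalIntegral_deriv_one_div_add (ha : 1 ≤ a) :
    ∫ x in (0 : ℝ)..1, deriv (fun x : ℝ ↦ 1 / (a + x)) x = 1 / (a + 1) - 1 / a := by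
  have hbound := hasDerivBound_one_div_add ha 1
  rw [intervalIntegral.integral_deriv_eq_sub, add_zero]
  · intro x hx
    rw [uIcc_of_le zero_le_one] at hx
    exact (hbound.contDiffAt x hx).differentiableAt (by simp)
  · refine ContinuousOn.intervalIntegrable ?_
    rw [uIcc_of_le zero_le_one]
    exact hbound.deriv.continuousOn

/-- The values of `tiltedCoeff d` at the derivative of `fun x ↦ 1 / (a + x)`. -/
noncomputable def reciprocalCoeff (d a : ℕ) : ℕ → ℝ
  | 0 => -1 / a ^ 2
  | 1 => (1 / (a + 1) - 1 / a) + 1 / a ^ 2 + 2 * d / a ^ 3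
  | 2 => (1 / (a + 1) ^ 2 - 1 / a ^ 2) / 2 + 1 / a ^ 3 - 3 * d ^ 2 / a ^ 4
  | 3 => (d + 1 / 2) * (1 / a ^ 2 - 1 / (a + 1) ^ 2 - 2 / a ^ 3)
      + (1 / ((a : ℝ) + 1) ^ 3 - 1 / a ^ 3) / 6
      - (3 * (d : ℝ) ^ 2 + 3 * d + 1) / a ^ 4 + 4 * d ^ 3 / a ^ 5
  | _ + 4 => 0

theorem tiltedCoeff_deriv_one_div_add (ha : 1 ≤ a) :
    tiltedCoeff d (deriv fun x : ℝ ↦ 1 / (a + x)) = reciprocalCoeff d a := by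
  have hiter := iteratedDeriv_deriv_one_div_add (a : ℝ)
  have hvalue := deriv_one_div_add (a : ℝ)
  have hderiv := hiter 1
  have hintegral := intervalIntegral_deriv_one_div_add ha
  rw [iteratedDeriv_one] at hderiv
  generalize deriv (fun x : ℝ ↦ 1 / (a + x)) = f at *
  funext i
  match i with
  | 0 => simp [tiltedCoeff, reciprocalCoeff, hvalue]
  | 1 | 2 | 3 =>
    simp only [tiltedCoeff, reciprocalCoeff, hintegral, hiter, hderiv, Nat.factorial]
    simp only [hvalue]
    push_cast
    ring
  | _ + 4 => rfl

open PowerSeries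

theorem eventually_sum_erase_eq (hd : 1 ≤ d) (u : ℕ → ℝ) :
    (fun b ↦ ∑ a ∈ Finset.Ico 1 b, u a + -u d) =ᶠ[atTop]
      fun b ↦ ∑ a ∈ (Finset.Ico 1 b).erase d, u a :=
  (eventually_gt_atTop d).mono fun b hb ↦ by
    simp only [← Finset.add_sum_erase (Finset.Ico 1 b) u (Finset.mem_Ico.2 ⟨hd, hb⟩)]
    ring

theorem hasExpansion_sum_erase_reciprocalCoeff_zero (hd : 1 ≤ d) :
    HasExpansion 2 (fun b ↦ ∑ a ∈ (Finset.Ico 1 b).erase d, reciprocalCoeff d a 0)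
      (C (1 / (d : ℝ) ^ 2 - zetaR 2) + X) := by
  have hsum := ((hasExpansion_const (-1) 2).mul hasExpansion_sum_Ico_one_div_sq).add
    (hasExpansion_const (-reciprocalCoeff d d 0) 2)
  refine ((hsum.congr' ?_).congr' (eventually_sum_erase_eq hd _)).congr_coeff fun i hi ↦ ?_
  · refine .of_forall fun b ↦ ?_
    simp only [Finset.mul_sum, reciprocalCoeff, mul_one_div]
  · interval_cases i <;> simp [reciprocalCoeff]
    ring

theorem hasExpansion_sum_erase_reciprocalCoeff_one (hd : 1 ≤ d) :
    HasExpansion 1 (fun b ↦ ∑ a ∈ (Finset.Ico 1 b).erase d, reciprocalCoeff d a 1)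
      (C (zetaR 2 + 2 * d * zetaR 3 - 1 - reciprocalCoeff d d 1)) := by
  have htelescope : HasExpansion 1 (fun b ↦ ∑ a ∈ Finset.Ico 1 b, (1 / ((a : ℝ) + 1) - 1 / a))
      (C (-1)) := by
    refine (isBigO_refl (fun b : ℕ ↦ (b : ℝ)⁻¹ ^ 1) atTop).congr' ?_ .rfl
    filter_upwards [eventually_ge_atTop 1] with b hb
    simp [-one_div, sum_Ico_one_div_sub hb]
  have hsum := ((htelescope.add (hasExpansion_sum_Ico_one_div_pow le_rfl)).add
    ((hasExpansion_const (2 * d) 1).mul (hasExpansion_sum_Ico_one_div_pow (s := 3) (by simp)))).add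
    (hasExpansion_const (-reciprocalCoeff d d 1) 1)
  refine ((hsum.congr' ?_).congr' (eventually_sum_erase_eq hd _)).congr_coeff fun i hi ↦ ?_
  · refine .of_forall fun b ↦ ?_
    simp only [Finset.mul_sum, reciprocalCoeff, mul_one_div, ← Finset.sum_add_distrib]
  · interval_cases i
    simp
    ring

variable {ν : ℕ → Measure ℝ}

theorem hasExpansion_integral_deriv (hd : 1 ≤ d)
    (hν : ∀ b, d < b → IsSelfSimilar b (tiltedWeight b d) (ν b)) :
    HasExpansion 4 (fun b ↦ ∫ x, deriv (fun x : ℝ ↦ 1 / (d + x)) x ∂ν b)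
      (PowerSeries.mk (reciprocalCoeff d d)) := by
  refine isBigO_inv_pow_of_abs_le (K := 7 * (d + 1) ^ 4 * (120 / d ^ 2))
    ((eventually_gt_atTop d).mono fun b hb ↦ ?_)
  simp only [coeff_mk, ← tiltedCoeff_deriv_one_div_add hd]
  exact abs_integral_sub_tiltedCoeff_le (hd.trans_lt hb) hb (hν b hb) fun i hi ↦
    hasDerivBound_deriv_one_div_add hd hi

theorem abs_sum_erase_integral_deriv_sub_le (hd : 1 ≤ d) (hb : d < b) {ν : Measure ℝ}
    (hν : IsSelfSimilar b (tiltedWeight b d) ν) :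
    |∑ a ∈ (Finset.Ico 1 b).erase d, ∫ x, deriv (fun x : ℝ ↦ 1 / (a + x)) x ∂ν
      - ∑ a ∈ (Finset.Ico 1 b).erase d, (reciprocalCoeff d a 0 + reciprocalCoeff d a 1 / b)|
      ≤ 1800 * (d + 1) ^ 4 * zetaR 2 / b ^ 2 := by
  have hterm {a : ℕ} (ha : a ∈ Finset.Ico 1 b) :
      |∫ x, deriv (fun x : ℝ ↦ 1 / (a + x)) x ∂ν
        - (reciprocalCoeff d a 0 + reciprocalCoeff d a 1 / b)|
      ≤ 1800 * (d + 1) ^ 4 / b ^ 2 * (1 / a ^ 2) := by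
    have ha_one := (Finset.mem_Ico.1 ha).1
    rw [← tiltedCoeff_deriv_one_div_add ha_one]
    refine (abs_integral_sub_linear_le (hd.trans_lt hb) hb hν fun i hi ↦
      hasDerivBound_deriv_one_div_add ha_one hi).trans_eq ?_
    ring
  rw [← Finset.sum_sub_distrib]
  calc _ ≤ ∑ a ∈ (Finset.Ico 1 b).erase d, 1800 * (d + 1 : ℝ) ^ 4 / b ^ 2 * (1 / (a : ℝ) ^ 2) :=
        (Finset.abs_sum_le_sum_abs _ _).trans
          (Finset.sum_le_sum fun a ha ↦ hterm (Finset.mem_of_mem_erase ha))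
    _ ≤ 1800 * (d + 1 : ℝ) ^ 4 / b ^ 2 * zetaR 2 := by
        rw [← Finset.mul_sum]
        gcongr
        exact (Finset.sum_le_sum_of_subset_of_nonneg (Finset.erase_subset _ _)
          fun _ _ _ ↦ by positivity).trans (sum_Ico_one_div_pow_le_zetaR le_rfl)
    _ = _ := by ring

/-- The coefficients of the expansion of the sum over the leading digits `a ≠ d` in
`irwinCorrection b d` in powers of `1 / b`, truncated at order `2`. -/
noncomputable def offDiagonalCoeff (d : ℕ) : ℕ → ℝ
  | 0 => 1 / d ^ 2 - zetaR 2
  | 1 => zetaR 2 + 2 * d * zetaR 3 - reciprocalCoeff d d 1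
  | _ + 2 => 0

theorem hasExpansion_sum_erase_integral_deriv (hd : 1 ≤ d)
    (hν : ∀ b, d < b → IsSelfSimilar b (tiltedWeight b d) (ν b)) :
    HasExpansion 2
      (fun b ↦ ∑ a ∈ (Finset.Ico 1 b).erase d, ∫ x, deriv (fun x : ℝ ↦ 1 / (a + x)) x ∂ν b)
      (PowerSeries.mk (offDiagonalCoeff d)) := by
  have hexpansion := (hasExpansion_sum_erase_reciprocalCoeff_zero hd).add
    ((hasExpansion_sum_erase_reciprocalCoeff_one hd).inv_pow_mul 1)
  have herror := isBigO_inv_pow_of_abs_le ((eventually_gt_atTop d).mono fun b hb ↦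
    abs_sum_erase_integral_deriv_sub_le hd hb (hν b hb))
  have hsum : HasExpansion 2
      (fun b ↦ ∑ a ∈ (Finset.Ico 1 b).erase d, ∫ x, deriv (fun x : ℝ ↦ 1 / (a + x)) x ∂ν b)
      (C (1 / (d : ℝ) ^ 2 - zetaR 2) + X
        + X ^ 1 * C (zetaR 2 + 2 * d * zetaR 3 - 1 - reciprocalCoeff d d 1)) := by
    refine (IsBigO.add herror hexpansion).congr_left fun b ↦ ?_
    simp only [Finset.sum_add_distrib, ← Finset.sum_div]
    ring
  refine hsum.congr_coeff fun i hi ↦ ?_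
  · rw [pow_one, map_add, map_add, coeff_mk, mul_comm X]
    interval_cases i
    · simp [offDiagonalCoeff]
    · rw [coeff_succ_mul_X, coeff_zero_C, coeff_one_X, coeff_C, if_neg one_ne_zero,
        offDiagonalCoeff]
      ring

end CorrectionExpansion

section IrwinExpansion

variable {b d k : ℕ}

theorem decayRate_eq_inv_sq_mul (hb : 0 < b) :
    decayRate b = (b : ℝ)⁻¹ ^ 2 * (1 - (b : ℝ)⁻¹ + (b : ℝ)⁻¹ ^ 2)⁻¹ := by
  rw [decayRate, inv_pow, ← mul_inv]
  congr 1
  field_simp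

open PowerSeries

/-- The coefficients of the expansion of `irwinCorrection b d` in powers of `1 / b`, truncated at
order `4`. -/
noncomputable def correctionCoeff (d : ℕ) : ℕ → ℝ
  | 0 => -reciprocalCoeff d d 0
  | 1 => -reciprocalCoeff d d 1
  | 2 => -(reciprocalCoeff d d 2 + offDiagonalCoeff d 0)
  | 3 => -(reciprocalCoeff d d 3 + offDiagonalCoeff d 0 + offDiagonalCoeff d 1)
  | _ + 4 => 0

variable {ν : ℕ → Measure ℝ}

theorem hasExpansion_irwinCorrection (hd : 1 ≤ d)
    (hν : ∀ b, d < b → IsSelfSimilar b (tiltedWeight b d) (ν b)) :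
    HasExpansion 4 (fun b ↦ irwinCorrection b d (ν b)) (PowerSeries.mk (correctionCoeff d)) := by
  have hoffDiagonal := (hasExpansion_sum_erase_integral_deriv hd hν).inv_pow_mul 2
  have hsum := (hasExpansion_integral_deriv hd hν).add
    (hasExpansion_inv_one_sub_add_sq.mul hoffDiagonal)
  refine (((hasExpansion_const (-1) 4).mul hsum).congr' ?_).congr_coeff fun i hi ↦ ?_
  · filter_upwards [eventually_gt_atTop 0] with b hb
    rw [irwinCorrection, decayRate_eq_inv_sq_mul hb]
    ring
  · rw [coeff_C_mul, map_add, coeff_mk, coeff_mk, coeff_mul]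
    interval_cases i <;>
      simp [Finset.Nat.antidiagonal_succ, coeff_X_pow_mul', correctionCoeff, decayCoeff]
    ring

/-- The coefficient of `1 / b ^ (2 * k - 1 + i)` in the expansion of `irwinSum b d k - b * log b`,
for `i < 4`. -/
noncomputable def irwinCoeff (d k i : ℕ) : ℝ :=
  (d + 1 / 2) * ∑ j ∈ Finset.range (i + 1), decayCoeff k j * correctionCoeff d (i - j)

theorem hasExpansion_irwinCoeff (hd : 1 ≤ d) (k : ℕ)
    (hν : ∀ b, d < b → IsSelfSimilar b (tiltedWeight b d) (ν b)) :
    HasExpansion 4 (fun b ↦ (d + 1 / 2) * ((1 - (b : ℝ)⁻¹ + (b : ℝ)⁻¹ ^ 2)⁻¹ ^ k *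
      irwinCorrection b d (ν b))) (PowerSeries.mk (irwinCoeff d k)) := by
  refine ((hasExpansion_const _ 4).mul ((hasExpansion_inv_one_sub_add_sq_pow k).mul
    (hasExpansion_irwinCorrection hd hν))).congr_coeff fun i _ ↦ ?_
  rw [coeff_C_mul, coeff_mul, coeff_mk, irwinCoeff,
    Finset.Nat.sum_antidiagonal_eq_sum_range_succ_mk]
  simp only [coeff_mk]

theorem irwinCoeff_zero : irwinCoeff d k 0 = (d + 1 / 2) / (d : ℝ) ^ 2 := by
  simp only [irwinCoeff, zero_add, Finset.sum_range_one, tsub_zero, decayCoeff,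
    correctionCoeff, reciprocalCoeff]
  ring

theorem irwinCoeff_one (hd : 1 ≤ d) : irwinCoeff d k 1 =
    (d + 1 / 2) * (((k : ℝ) - 2) * d + k - 3) / ((d : ℝ) ^ 2 * (d + 1)) := by
  simp only [irwinCoeff, Finset.sum_range_succ, Finset.sum_range_zero, Nat.reduceAdd,
    Nat.reduceSub, tsub_zero, decayCoeff,
    correctionCoeff, reciprocalCoeff]
  field_simp
  ring

theorem irwinCoeff_two (hd : 1 ≤ d) : irwinCoeff d k 2 =
    (d + 1 / 2) * zetaR 2 + (d + 1 / 2) * (((k : ℝ) ^ 2 - 5 * k + 4) * d ^ 3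
      + (2 * (k : ℝ) ^ 2 - 12 * k + 8) * d ^ 2 + ((k : ℝ) ^ 2 - 7 * k + 1) * d - 2)
        / (2 * (d : ℝ) ^ 3 * (d + 1) ^ 2) := by
  simp only [irwinCoeff, Finset.sum_range_succ, Finset.sum_range_zero, Nat.reduceAdd,
    Nat.reduceSub, tsub_zero, decayCoeff,
    correctionCoeff, reciprocalCoeff, offDiagonalCoeff]
  field_simp
  ring

theorem irwinCoeff_three (hd : 1 ≤ d) : irwinCoeff d k 3 =
    (d + 1 / 2) * (-2 * d * zetaR 3 + k * zetaR 2
      + (((k : ℝ) ^ 3 - 9 * (k : ℝ) ^ 2 + 14 * k) * d ^ 5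
        + (3 * (k : ℝ) ^ 3 - 30 * (k : ℝ) ^ 2 + 45 * k + 42) * d ^ 4
        + (3 * (k : ℝ) ^ 3 - 33 * (k : ℝ) ^ 2 + 39 * k + 114) * d ^ 3
        + ((k : ℝ) ^ 3 - 12 * (k : ℝ) ^ 2 + 2 * k + 108) * d ^ 2
        + (-6 * (k : ℝ) + 43) * d + 6) / (6 * (d : ℝ) ^ 4 * (d + 1) ^ 3)) := by
  simp only [irwinCoeff, Finset.sum_range_succ, Finset.sum_range_zero, Nat.reduceAdd,
    Nat.reduceSub, tsub_zero, decayCoeff,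
    correctionCoeff, reciprocalCoeff, offDiagonalCoeff]
  field_simp
  ring

theorem exists_isSelfSimilar_tiltedWeight (d : ℕ) :
    ∃ ν : ℕ → Measure ℝ, ∀ b, d < b → IsSelfSimilar b (tiltedWeight b d) (ν b) := by
  have hexists (b : ℕ) : ∃ ν, d < b → IsSelfSimilar b (tiltedWeight b d) ν := by
    by_cases hb : d < b
    · obtain ⟨ν, hν⟩ := exists_isSelfSimilar (tiltedWeight_nonneg (d.zero_le.trans_lt hb))
        (sum_tiltedWeight hb)
      exact ⟨ν, fun _ ↦ hν⟩
    · exact ⟨0, fun h ↦ absurd h hb⟩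
  exact ⟨fun b ↦ (hexists b).choose, fun b ↦ (hexists b).choose_spec⟩

theorem isBigO_irwinSum_sub_irwinCorrection (hd : 1 ≤ d) (hk : 4 ≤ k)
    (hν : ∀ b, d < b → IsSelfSimilar b (tiltedWeight b d) (ν b)) :
    (fun b : ℕ ↦ irwinSum b d k - (b * Real.log b +
      b * (d + 1 / 2) * decayRate b ^ k * irwinCorrection b d (ν b)))
      =O[atTop] fun b : ℕ ↦ (b : ℝ)⁻¹ ^ (2 * k + 3) := by
  obtain ⟨j, rfl⟩ : ∃ j, k = j + 1 := ⟨k - 1, by lia⟩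
  refine isBigO_inv_pow_of_abs_le (K := 24 * (d + 1) ^ 2 * 2 ^ j)
    ((eventually_gt_atTop d).mono fun b hb ↦ ?_)
  have hb_one : (1 : ℝ) ≤ b := by exact_mod_cast hd.trans hb.le
  refine (abs_irwinSum_succ_sub_le (Finset.mem_Ico.2 ⟨hd, hb⟩) (hν b hb)).trans ?_
  rw [div_pow, ← pow_mul, div_mul_div_comm, ← pow_add]
  exact div_le_div_of_nonneg_left (by positivity) (by positivity)
    (pow_le_pow_right₀ hb_one (by lia))

theorem isBigO_irwinSum_sub_sum_irwinCoeff (hd : 1 ≤ d) (hk : 4 ≤ k) :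
    (fun b : ℕ ↦ irwinSum b d k - (b * Real.log b +
      ∑ i ∈ Finset.range 4, irwinCoeff d k i / (b : ℝ) ^ (2 * k - 1 + i)))
      =O[atTop] fun b : ℕ ↦ (b : ℝ)⁻¹ ^ (2 * k + 3) := by
  obtain ⟨ν, hν⟩ := exists_isSelfSimilar_tiltedWeight d
  have hexponent : 2 * k - 1 + 4 = 2 * k + 3 := by lia
  have hseries := ((isBigO_refl (fun b : ℕ ↦ (b : ℝ)⁻¹ ^ (2 * k - 1)) atTop).mul
    (hasExpansion_irwinCoeff hd k hν)).congr_right fun b ↦ by rw [← pow_add, hexponent]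
  simp only [coeff_mk] at hseries
  refine ((isBigO_irwinSum_sub_irwinCorrection hd hk hν).add hseries).congr' ?_ .rfl
  filter_upwards [eventually_gt_atTop 0] with b hb
  have hb_pos : (0 : ℝ) < b := by exact_mod_cast hb
  have hfactor : (b : ℝ) * (b : ℝ)⁻¹ ^ (2 * k) = (b : ℝ)⁻¹ ^ (2 * k - 1) := by
    obtain ⟨m, hm⟩ : ∃ m, 2 * k = m + 1 := ⟨2 * k - 1, by lia⟩
    rw [hm, Nat.add_sub_cancel, pow_succ', mul_inv_cancel_left₀ hb_pos.ne']
  have hsum : ∑ i ∈ Finset.range 4, irwinCoeff d k i / (b : ℝ) ^ (2 * k - 1 + i) =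
      (b : ℝ)⁻¹ ^ (2 * k - 1) *
        ∑ i ∈ Finset.range 4, irwinCoeff d k i * (b : ℝ)⁻¹ ^ i := by
    rw [Finset.mul_sum]
    refine Finset.sum_congr rfl fun i _ ↦ ?_
    rw [div_eq_mul_inv, pow_add, mul_inv, inv_pow, inv_pow]
    ring
  rw [hsum, decayRate_eq_inv_sq_mul hb, mul_pow, ← pow_mul, ← hfactor]
  ring

end IrwinExpansion

end Irwin

theorem irwin_d_k_asymptotic (d k : ℕ) (hd : 1 ≤ d) (hk : 4 ≤ k) (a1 a2 a3 a4 : ℝ)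
    (h1 : a1 = ((d : ℝ) + 1 / 2) / (d : ℝ) ^ 2)
    (h2 : a2 = ((d : ℝ) + 1 / 2) * (((k : ℝ) - 2) * d + (k : ℝ) - 3)
      / ((d : ℝ) ^ 2 * ((d : ℝ) + 1)))
    (h3 : a3 = ((d : ℝ) + 1 / 2) * zetaR 2
      + ((d : ℝ) + 1 / 2) * (((k : ℝ) ^ 2 - 5 * k + 4) * (d : ℝ) ^ 3
          + (2 * (k : ℝ) ^ 2 - 12 * k + 8) * (d : ℝ) ^ 2
          + ((k : ℝ) ^ 2 - 7 * k + 1) * d - 2)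
        / (2 * (d : ℝ) ^ 3 * ((d : ℝ) + 1) ^ 2))
    (h4 : a4 = ((d : ℝ) + 1 / 2) * (-2 * (d : ℝ) * zetaR 3 + (k : ℝ) * zetaR 2
      + (((k : ℝ) ^ 3 - 9 * (k : ℝ) ^ 2 + 14 * k) * (d : ℝ) ^ 5
          + (3 * (k : ℝ) ^ 3 - 30 * (k : ℝ) ^ 2 + 45 * k + 42) * (d : ℝ) ^ 4
          + (3 * (k : ℝ) ^ 3 - 33 * (k : ℝ) ^ 2 + 39 * k + 114) * (d : ℝ) ^ 3
          + ((k : ℝ) ^ 3 - 12 * (k : ℝ) ^ 2 + 2 * k + 108) * (d : ℝ) ^ 2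
          + (-6 * (k : ℝ) + 43) * d + 6)
        / (6 * (d : ℝ) ^ 4 * ((d : ℝ) + 1) ^ 3))) :
    (fun b : ℕ => irwinSum b d k -
      ((b : ℝ) * Real.log b
        + a1 / (b : ℝ) ^ (2 * k - 1) + a2 / (b : ℝ) ^ (2 * k) + a3 / (b : ℝ) ^ (2 * k + 1)
        + a4 / (b : ℝ) ^ (2 * k + 2)))
      =O[atTop] fun b : ℕ => ((b : ℝ) ^ (2 * k + 3))⁻¹ := by
  rw [← Irwin.irwinCoeff_zero (k := k)] at h1
  rw [← Irwin.irwinCoeff_one hd] at h2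
  rw [← Irwin.irwinCoeff_two hd] at h3
  rw [← Irwin.irwinCoeff_three hd] at h4
  have hexponent₁ : 2 * k - 1 + 1 = 2 * k := by lia
  have hexponent₂ : 2 * k - 1 + 2 = 2 * k + 1 := by lia
  have hexponent₃ : 2 * k - 1 + 3 = 2 * k + 2 := by lia
  refine (Irwin.isBigO_irwinSum_sub_sum_irwinCoeff hd hk).congr (fun b ↦ ?_) fun b ↦ inv_pow _ _
  simp only [Finset.sum_range_succ, Finset.sum_range_zero, zero_add, add_zero, hexponent₁,
    hexponent₂, hexponent₃, h1, h2, h3, h4, add_assoc]
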